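/- arXiv:1302.3024 — 3 statements merged into one kernel-verified Lean document; each statement's English description precedes it below -/
import Mathlib

section
/- There exists a quasiperiodically forced increasing interval map f̂ : 𝔸 → 𝔸 (𝔸 = T¹ × I) such that: f̂ has no continuous invariant curves; f̂(𝔸) ⊆ int 𝔸; and the global attractor ⋂_{n∈ℕ} f̂ⁿ(𝔸) is pinched and contains a unique minimal set M, which is almost automorphic. -/
open Set Function MeasureTheory

noncomputable section

/-- The circle `T¹ = ℝ/ℤ`. -/
abbrev T1 := AddCircle (1 : ℝ)

/-- The `n`-th iterate (`n ∈ ℤ`) of a bijection. -/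
def zIter {X : Type*} (g : Equiv.Perm X) (n : ℤ) : X → X := fun x => (g ^ n) x

/-- A set of integers is syndetic if it has bounded gaps. -/
def ZSyndetic (S : Set ℤ) : Prop := ∃ N : ℕ, ∀ n : ℤ, ∃ k ∈ S, |k - n| ≤ (N : ℤ)

/-- A homeomorphism `α` of a metric space is almost periodic if for every `ε > 0` the set
`{n ∈ ℤ | dist(αⁿ, Id) < ε}` is syndetic. -/
def AlmostPeriodicHomeo {Θ : Type*} [MetricSpace Θ] (α : Θ ≃ₜ Θ) : Prop :=
  ∀ ε > (0 : ℝ), ZSyndetic {n : ℤ | ∀ θ : Θ, dist (zIter α.toEquiv n θ) θ < ε}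

/-- A homeomorphism is minimal if every (two-sided) orbit is dense. -/
def MinimalHomeo {Θ : Type*} [TopologicalSpace Θ] (α : Θ ≃ₜ Θ) : Prop :=
  ∀ θ : Θ, Dense (range fun n : ℤ => zIter α.toEquiv n θ)

/-- A self-map `g` of a metric space is almost periodic if its family of iterates
is (uniformly) equicontinuous. -/
def AlmostPeriodicMap {Y : Type*} [MetricSpace Y] (g : Y → Y) : Prop :=
  ∀ ε > (0 : ℝ), ∃ δ > (0 : ℝ), ∀ y y' : Y, dist y y' < δ → ∀ n : ℕ, dist (g^[n] y) (g^[n] y') < ε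

/-- `h` is a factor map (semiconjugacy) from `(X, f)` onto `(Y, g)`:
a continuous surjection with `h ∘ f = g ∘ h`.  Then `(X, f)` is a topological
extension of `(Y, g)`. -/
def IsFactorMap {X Y : Type*} [TopologicalSpace X] [TopologicalSpace Y]
    (f : X → X) (g : Y → Y) (h : X → Y) : Prop :=
  Continuous h ∧ Surjective h ∧ h ∘ f = g ∘ h

/-- A map `h` is almost 1-1 if the set of points of the target having exactly one
preimage is dense. -/
def AlmostOneOne {X Y : Type*} [TopologicalSpace Y] (h : X → Y) : Prop :=
  Dense {y : Y | ∃! x, h x = y}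

/-- A witness that the system `(X, f)` is almost automorphic: an almost periodic
homeomorphism of a compact metric space which is an almost 1-1 factor of `(X, f)`. -/
structure AAWitness {X : Type*} [TopologicalSpace X] (f : X → X) where
  (Y : Type)
  [mY : MetricSpace Y]
  [cY : CompactSpace Y]
  (g : Y ≃ₜ Y)
  (hmap : X → Y)
  (factor : IsFactorMap f (⇑g) hmap)
  (a11 : AlmostOneOne hmap)
  (ap : ∀ ε > (0 : ℝ), ∃ δ > (0 : ℝ), ∀ y y' : Y, dist y y' < δ →
        ∀ n : ℤ, dist (zIter g.toEquiv n y) (zIter g.toEquiv n y') < ε)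

/-- `M` is a minimal set of `f`: nonempty, closed, invariant, and without proper
nonempty closed invariant subsets. -/
def IsMinimalSet {X : Type*} [TopologicalSpace X] (f : X → X) (M : Set X) : Prop :=
  M.Nonempty ∧ IsClosed M ∧ f '' M = M ∧
    ∀ M' ⊆ M, M'.Nonempty → IsClosed M' → f '' M' ⊆ M' → M' = M

/-- The restriction of `f` to an invariant set. -/
def restrictMap {X : Type*} {f : X → X} {M : Set X} (hM : Set.MapsTo f M M) : ↥M → ↥M :=
  Set.MapsTo.restrict f M M hM

/-- `M` is an almost automorphic minimal set of `f`: `f` restricted to `M` admits an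
almost periodic almost 1-1 factor. -/
def IsAAMinimal {X : Type*} [MetricSpace X] (f : X → X) (M : Set X) : Prop :=
  IsMinimalSet f M ∧ ∀ hM : Set.MapsTo f M M, Nonempty (AAWitness (restrictMap hM))

/-- `M` is an almost periodic minimal set of `f`: the family of iterates of the
restriction of `f` to `M` is equicontinuous. -/
def IsAPMinimal {X : Type*} [MetricSpace X] (f : X → X) (M : Set X) : Prop :=
  IsMinimalSet f M ∧ ∀ hM : Set.MapsTo f M M, AlmostPeriodicMap (restrictMap hM)

/-- A subset of a product is pinched if some fibre is a singleton. -/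
def Pinched {Θ X : Type*} (A : Set (Θ × X)) : Prop := ∃ θ : Θ, ∃! x : X, (θ, x) ∈ A

/-- An `α`-forced increasing interval map on `Θ × I`: a continuous skew product over `α`
whose fibre maps are strictly increasing. -/
def ForcedIncreasing {Θ : Type*} [TopologicalSpace Θ] {I : Set ℝ} (α : Θ → Θ)
    (f : Θ × ↥I → Θ × ↥I) : Prop :=
  Continuous f ∧ (∀ p : Θ × ↥I, (f p).1 = α p.1) ∧
    ∀ θ : Θ, StrictMono fun x : ↥I => (f (θ, x)).2

/-- The fibre of `M ⊆ Θ × I` over `θ`, as a set of reals. -/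
def fiberSet {Θ : Type*} {I : Set ℝ} (M : Set (Θ × ↥I)) (θ : Θ) : Set ℝ :=
  (fun x : ↥I => (x : ℝ)) '' {x : ↥I | (θ, x) ∈ M}

/-- The filled-in envelope `[φ⁻_M, φ⁺_M]` of `M`, where `φ⁻_M(θ) = inf M_θ` and
`φ⁺_M(θ) = sup M_θ`. -/
def FilledEnvelope {Θ : Type*} {I : Set ℝ} (M : Set (Θ × ↥I)) : Set (Θ × ↥I) :=
  {p : Θ × ↥I | sInf (fiberSet M p.1) ≤ (p.2 : ℝ) ∧ (p.2 : ℝ) ≤ sSup (fiberSet M p.1)}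

/-- The graph of a curve `γ : Θ → I`. -/
def curveGraph {Θ : Type*} {I : Set ℝ} (γ : Θ → ↥I) : Set (Θ × ↥I) :=
  {p : Θ × ↥I | p.2 = γ p.1}

/-- The conclusion of the blow-up construction (properties (i)-(v) of the main theorem):
`f̂` is a topological extension of `f` via the fibre-respecting factor map `h`, `f̂` is an
`α`-forced increasing interval map, the fibre maps of `h` are non-decreasing, `h` is
injective off `h⁻¹(Γ)`, countably many points of `Γ` have non-degenerate vertical-segment
preimages while all other points of `Γ` have singleton preimages, and `h⁻¹(Γ)` contains
the graph of no continuous curve. -/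
def BlowUpConclusion {Θ : Type*} [TopologicalSpace Θ] {I : Set ℝ}
    (α : Θ → Θ) (f : Θ × ↥I → Θ × ↥I) (γ : Θ → ↥I)
    (fhat : Θ × ↥I → Θ × ↥I) (h : Θ × ↥I → Θ × ↥I) : Prop :=
  IsFactorMap fhat f h ∧ (∀ p : Θ × ↥I, (h p).1 = p.1) ∧
  ForcedIncreasing α fhat ∧
  (∀ θ : Θ, Monotone fun x : ↥I => (h (θ, x)).2) ∧
  Set.InjOn h (h ⁻¹' curveGraph γ)ᶜ ∧
  (∃ C : Set (Θ × ↥I), C ⊆ curveGraph γ ∧ C.Countable ∧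
    (∀ p ∈ C, ∃ x₁ x₂ : ↥I, x₁ < x₂ ∧ h ⁻¹' {p} = {p.1} ×ˢ Set.Icc x₁ x₂) ∧
    (∀ p ∈ curveGraph γ \ C, ∃ x : ↥I, h ⁻¹' {p} = {(p.1, x)})) ∧
  (∀ η : Θ → ↥I, Continuous η → ¬ (curveGraph η ⊆ h ⁻¹' curveGraph γ))

/-!
Over a rotation by `a` on a compact connected group, the parabolic map `y ↦ y / (1 + |y|)` contracts
every fibre to the invariant curve `y = 0`, but not exponentially fast. This leaves room to blow up
the points of the curve over the orbit `{n • a}` to vertical segments, one coordinate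
`κₙ ∈ [-1, 1]` for each `n`, in such a way that near `(n • a, 0)` the coordinate `κₙ` is a blend of
`sign y` and `sin (1 / ‖θ - n • a‖)`. In the coordinate `x = y + ∑ wₙ κₙ`, with summable weights
`wₙ > 0`, the blown-up system is again a forced increasing map. Its attractor is the preimage of
`y = 0`: it has singleton fibres off the orbit of `0`, but the topologist's sine curve over `0`
prevents it from containing a continuous graph. A pinched attractor over a minimal rotation has
exactly one minimal set, the closure of its singleton fibres, and this set is almost automorphic.
-/

open Filter Topology

/-! ### Pinched invariant sets -/

section Pinched

variable {Θ X : Type*} {f : Θ × X → Θ × X} {α : Θ → Θ} {A M : Set (Θ × X)}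

/-- The base points over which the fibre of `A` is a singleton. -/
def pinchedPoints (A : Set (Θ × X)) : Set Θ := {θ | ∃! x, (θ, x) ∈ A}

lemma mapsTo_pinchedPoints (hf : Semiconj Prod.fst f α) (hα : Injective α) (hA : f '' A = A) :
    MapsTo α (pinchedPoints A) (pinchedPoints A) := by
  rintro θ ⟨x, hx, hunique⟩
  have hfst : (f (θ, x)).1 = α θ := hf (θ, x)
  refine ⟨(f (θ, x)).2, ?_, fun y hy => ?_⟩
  · rw [← hfst]
    exact hA.subset (mem_image_of_mem f hx)
  · obtain ⟨⟨θ', x'⟩, hx', hfx'⟩ := hA.superset hy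
    obtain rfl : θ' = θ := hα ((hf _).symm.trans (congrArg Prod.fst hfx'))
    rw [← hunique x' hx', hfx']

variable [TopologicalSpace Θ]

lemma dense_pinchedPoints (hf : Semiconj Prod.fst f α) (hα : Injective α)
    (hdense : ∀ θ, DenseRange fun n : ℕ => α^[n] θ) (hA : f '' A = A) (hpin : Pinched A) :
    Dense (pinchedPoints A) := by
  obtain ⟨θ, hθ⟩ := hpin
  refine (hdense θ).mono ?_
  rintro _ ⟨n, rfl⟩
  exact (mapsTo_pinchedPoints hf hα hA).iterate n hθ

variable [TopologicalSpace X]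

lemma image_fst_eq_univ [T2Space Θ] (hf : Semiconj Prod.fst f α)
    (hdense : ∀ θ, DenseRange fun n : ℕ => α^[n] θ) (hM : IsCompact M) (hne : M.Nonempty)
    (hinv : MapsTo f M M) : Prod.fst '' M = univ := by
  obtain ⟨p, hp⟩ := hne
  have horbit : range (fun n : ℕ => α^[n] p.1) ⊆ Prod.fst '' M := by
    rintro _ ⟨n, rfl⟩
    exact ⟨f^[n] p, hinv.iterate n hp, hf.iterate_right n p⟩
  exact ((hdense p.1).mono horbit).closure_eq ▸ (hM.image continuous_fst).isClosed.closure_eq.symm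

/-- The closure of the union of the singleton fibres of `A`. For a compact invariant set over
a minimal base this is the unique minimal set contained in `A`. -/
def pinchedCore (A : Set (Θ × X)) : Set (Θ × X) := closure (A ∩ Prod.fst ⁻¹' pinchedPoints A)

lemma pinchedCore_subset (hA : IsClosed A) : pinchedCore A ⊆ A :=
  closure_minimal inter_subset_left hA

lemma Pinched.pinchedCore_nonempty (hpin : Pinched A) : (pinchedCore A).Nonempty := by
  obtain ⟨θ, x, hx, hunique⟩ := hpin
  exact ⟨(θ, x), subset_closure ⟨hx, x, hx, hunique⟩⟩

lemma mapsTo_pinchedCore (hfc : Continuous f) (hf : Semiconj Prod.fst f α) (hα : Injective α)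
    (hA : f '' A = A) : MapsTo f (pinchedCore A) (pinchedCore A) := by
  refine MapsTo.closure (fun p hp => ⟨hA.subset (mem_image_of_mem f hp.1), ?_⟩) hfc
  rw [mem_preimage, hf p]
  exact mapsTo_pinchedPoints hf hα hA hp.2

lemma pinchedCore_subset_of_mapsTo [T2Space Θ] [T2Space X] (hf : Semiconj Prod.fst f α)
    (hdense : ∀ θ, DenseRange fun n : ℕ => α^[n] θ) (hMA : M ⊆ A) (hM : IsCompact M)
    (hne : M.Nonempty) (hinv : MapsTo f M M) : pinchedCore A ⊆ M := by
  refine closure_minimal ?_ hM.isClosed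
  rintro ⟨θ, x⟩ ⟨hx, hθ⟩
  obtain ⟨⟨θ', x'⟩, hx', rfl⟩ := (image_fst_eq_univ hf hdense hM hne hinv).superset (mem_univ θ)
  rwa [hθ.unique hx (hMA hx')]

lemma isMinimalSet_pinchedCore [T2Space Θ] [T2Space X] (hfc : Continuous f)
    (hf : Semiconj Prod.fst f α) (hα : Injective α)
    (hdense : ∀ θ, DenseRange fun n : ℕ => α^[n] θ) (hAc : IsCompact A) (hA : f '' A = A)
    (hpin : Pinched A) : IsMinimalSet f (pinchedCore A) := by
  have hsub := pinchedCore_subset hAc.isClosed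
  have hcompact : IsCompact (pinchedCore A) := hAc.of_isClosed_subset isClosed_closure hsub
  have hmaps := mapsTo_pinchedCore hfc hf hα hA
  have hmin {M} (hM : M ⊆ pinchedCore A) (hne : M.Nonempty) (hcl : IsClosed M)
      (hinv : MapsTo f M M) : M = pinchedCore A :=
    hM.antisymm <| pinchedCore_subset_of_mapsTo hf hdense (hM.trans hsub)
      (hcompact.of_isClosed_subset hcl hM) hne hinv
  refine ⟨hpin.pinchedCore_nonempty, isClosed_closure, ?_,
    fun M hM hne hcl hinv => hmin hM hne hcl (mapsTo_iff_image_subset.2 hinv)⟩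
  exact hmin hmaps.image_subset (hpin.pinchedCore_nonempty.image f)
    (hcompact.image hfc).isClosed ((mapsTo_image f _).mono_left hmaps.image_subset)

end Pinched

lemma isAAMinimal_pinchedCore {Θ : Type} {X : Type*} [MetricSpace Θ] [CompactSpace Θ]
    [MetricSpace X] {f : Θ × X → Θ × X} {α : Θ ≃ₜ Θ} {A : Set (Θ × X)} (hfc : Continuous f)
    (hf : Semiconj Prod.fst f α) (hdense : ∀ θ, DenseRange fun n : ℕ => α^[n] θ)
    (hα : UniformEquicontinuous fun n : ℤ => zIter α.toEquiv n) (hAc : IsCompact A)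
    (hA : f '' A = A) (hpin : Pinched A) : IsAAMinimal f (pinchedCore A) := by
  have hsub := pinchedCore_subset hAc.isClosed
  have hfst : Prod.fst '' pinchedCore A = univ :=
    image_fst_eq_univ hf hdense (hAc.of_isClosed_subset isClosed_closure hsub)
      hpin.pinchedCore_nonempty (mapsTo_pinchedCore hfc hf α.injective hA)
  refine ⟨isMinimalSet_pinchedCore hfc hf α.injective hdense hAc hA hpin, fun hM => ⟨{
    Y := Θ
    g := α
    hmap := fun p => p.1.1
    factor := ⟨by fun_prop, fun θ => ?_, funext fun p => hf p.1⟩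
    a11 := (dense_pinchedPoints hf α.injective hdense hA hpin).mono fun θ hθ => ?_
    ap := Metric.uniformEquicontinuous_iff.1 hα }⟩⟩
  · obtain ⟨p, hp, hpθ⟩ := hfst.superset (mem_univ θ)
    exact ⟨⟨p, hp⟩, hpθ⟩
  · obtain ⟨⟨θ, x⟩, hx, rfl⟩ := hfst.superset (mem_univ θ)
    refine ⟨⟨(θ, x), hx⟩, rfl, ?_⟩
    rintro ⟨⟨θ, x'⟩, hx'⟩ rfl
    exact Subtype.ext (Prod.ext rfl (hθ.unique (hsub hx') (hsub hx)))

theorem Pinched.exists_unique_isAAMinimal {Θ : Type} {X : Type*} [MetricSpace Θ] [CompactSpace Θ]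
    [MetricSpace X] {f : Θ × X → Θ × X} {α : Θ ≃ₜ Θ} {A : Set (Θ × X)} (hpin : Pinched A)
    (hfc : Continuous f) (hf : Semiconj Prod.fst f α)
    (hdense : ∀ θ, DenseRange fun n : ℕ => α^[n] θ)
    (hα : UniformEquicontinuous fun n : ℤ => zIter α.toEquiv n) (hAc : IsCompact A)
    (hA : f '' A = A) :
    ∃ M ⊆ A, IsAAMinimal f M ∧ ∀ M' ⊆ A, IsMinimalSet f M' → M' = M := by
  have hcore := isAAMinimal_pinchedCore hfc hf hdense hα hAc hA hpin
  refine ⟨pinchedCore A, pinchedCore_subset hAc.isClosed, hcore, fun M' hM' hmin' => ?_⟩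
  obtain ⟨hne, hcl, hinv, hmin⟩ := hmin'
  have hsub : pinchedCore A ⊆ M' :=
    pinchedCore_subset_of_mapsTo hf hdense hM' (hAc.of_isClosed_subset hcl hM') hne
      (mapsTo_iff_image_subset.2 hinv.subset)
  exact (hmin _ hsub hcore.1.1 hcore.1.2.1 hcore.1.2.2.1.subset).symm

lemma subset_iInter_iterate_image {X : Type*} {f : X → X} {A : Set X} (hA : f '' A = A) :
    A ⊆ ⋂ n : ℕ, f^[n] '' univ := by
  refine subset_iInter fun n => ?_
  have hAn : f^[n] '' A = A := by
    rw [image_iterate_eq]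
    exact iterate_fixed hA n
  exact hAn.superset.trans (image_mono (subset_univ A))

/-! ### Rotations of connected groups -/

lemma iterate_addRight {Θ : Type*} [AddGroup Θ] [TopologicalSpace Θ] [ContinuousAdd Θ]
    (a θ : Θ) (n : ℕ) : (Homeomorph.addRight a)^[n] θ = θ + n • a := by
  simp

lemma zIter_addRight {Θ : Type*} [AddGroup Θ] [TopologicalSpace Θ] [ContinuousAdd Θ]
    (a θ : Θ) (n : ℤ) : zIter (Homeomorph.addRight a).toEquiv n θ = θ + n • a := by
  change (Equiv.addRight a ^ n) θ = θ + n • a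
  simp

lemma denseRange_iterate_addRight {Θ : Type*} [AddGroup Θ] [TopologicalSpace Θ]
    [IsTopologicalAddGroup Θ] [CompactSpace Θ] {a : Θ} (ha : DenseRange fun n : ℤ => n • a)
    (θ : Θ) : DenseRange fun n : ℕ => (Homeomorph.addRight a)^[n] θ := by
  simp only [iterate_addRight]
  exact (Homeomorph.addLeft θ).surjective.denseRange.comp (denseRange_zsmul_iff_nsmul.1 ha)
    (Homeomorph.addLeft θ).continuous

lemma uniformEquicontinuous_zIter_addRight {Θ : Type*} [SeminormedAddCommGroup Θ] (a : Θ) :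
    UniformEquicontinuous fun n : ℤ => zIter (Homeomorph.addRight a).toEquiv n := by
  refine LipschitzWith.uniformEquicontinuous _ 1 fun n => ?_
  simp only [funext (zIter_addRight a · n)]
  exact (isometry_add_right (n • a)).lipschitz

/-- The orbit of `0` under the rotation by `a` is infinite and has dense complement. This is what
the blow-up of the orbit needs: a fibre meets at most one orbit point, and blown-up fibres are
limits of fibres off the orbit. -/
structure HasSparseOrbit {Θ : Type*} [AddGroup Θ] [TopologicalSpace Θ] (a : Θ) : Prop where
  injective : Injective fun n : ℤ => n • a
  dense_compl : Dense (range fun n : ℤ => n • a)ᶜ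

lemma injective_zsmul_of_denseRange {Θ : Type*} [AddGroup Θ] [TopologicalSpace Θ] [T1Space Θ]
    [Infinite Θ] {a : Θ} (ha : DenseRange fun n : ℤ => n • a) : Injective fun n : ℤ => n • a := by
  rw [injective_zsmul_iff_not_isOfFinAddOrder]
  intro hfin
  have hrange : (range fun n : ℤ => n • a).Finite := finite_zmultiples.2 hfin
  exact infinite_univ (ha.closure_eq ▸ hrange.isClosed.closure_eq.symm ▸ hrange)

lemma hasSparseOrbit_of_denseRange {Θ : Type*} [NormedAddCommGroup Θ] [PreconnectedSpace Θ]
    [Nontrivial Θ] {a : Θ} (ha : DenseRange fun n : ℤ => n • a) : HasSparseOrbit a := by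
  have : Infinite Θ := PreconnectedSpace.infinite
  refine ⟨injective_zsmul_of_denseRange ha, ?_⟩
  obtain ⟨θ, hθ⟩ : ∃ θ, θ ∉ range fun n : ℤ => n • a := by
    by_contra! hall
    have hcount : (univ : Set Θ).Countable := (countable_range _).mono fun θ _ => hall θ
    exact not_subsingleton Θ <| subsingleton_univ_iff.1 <|
      hcount.isTotallyDisconnected _ subset_rfl isPreconnected_univ
  have hcoset : DenseRange fun n : ℤ => θ + n • a :=
    (Homeomorph.addLeft θ).surjective.denseRange.comp ha (Homeomorph.addLeft θ).continuous
  refine hcoset.mono ?_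
  rintro _ ⟨n, rfl⟩ ⟨m, hm⟩
  exact hθ ⟨m - n, by simpa only [sub_smul, sub_eq_iff_eq_add] using hm⟩

/-! ### The topologist's sine curve -/

lemma not_tendsto_sin_atTop (L : ℝ) : ¬ Tendsto Real.sin atTop (𝓝 L) := by
  intro hL
  have hlim (b : ℝ) : Real.sin b = L := by
    have harg : Tendsto (fun n : ℕ => b + n * (2 * Real.pi)) atTop atTop :=
      tendsto_atTop_add_const_left _ _ <|
        tendsto_natCast_atTop_atTop.atTop_mul_const Real.two_pi_pos
    have hsin := hL.comp harg
    simp only [comp_def, Real.sin_add_nat_mul_two_pi] at hsin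
    exact tendsto_nhds_unique tendsto_const_nhds hsin
  have h0 := hlim 0
  have h1 := hlim (Real.pi / 2)
  simp only [Real.sin_zero, Real.sin_pi_div_two] at h0 h1
  linarith

section ConnectedNorm

variable {Θ : Type*} [NormedAddGroup Θ] [PreconnectedSpace Θ] [Nontrivial Θ]

lemma nhdsGT_zero_le_map_norm : 𝓝[>] (0 : ℝ) ≤ map norm (𝓝[≠] (0 : Θ)) := by
  obtain ⟨θ₁, hθ₁⟩ := exists_ne (0 : Θ)
  intro s hs
  obtain ⟨ε, hε, hεs⟩ := Metric.mem_nhdsWithin_iff.1 (mem_map.1 hs)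
  filter_upwards [Ioo_mem_nhdsGT (lt_min hε (norm_pos_iff.2 hθ₁))] with t ht
  obtain ⟨ht0, ht1⟩ := ht
  obtain ⟨θ, rfl⟩ : t ∈ range (norm : Θ → ℝ) :=
    mem_range_of_exists_le_of_exists_ge continuous_norm ⟨0, norm_zero.trans_le ht0.le⟩
      ⟨θ₁, (ht1.trans_le (min_le_right _ _)).le⟩
  exact hεs ⟨mem_ball_zero_iff.2 (ht1.trans_le (min_le_left _ _)), norm_pos_iff.1 ht0⟩

lemma not_continuous_of_eq_sin_inv_norm {g : Θ → ℝ} (hg : ∀ θ ≠ 0, g θ = Real.sin ‖θ‖⁻¹) :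
    ¬ Continuous g := by
  intro hgc
  have hsin : Tendsto (fun θ : Θ => Real.sin ‖θ‖⁻¹) (𝓝[≠] 0) (𝓝 (g 0)) :=
    (hgc.continuousAt.mono_left nhdsWithin_le_nhds).congr' <|
      eventually_nhdsWithin_of_forall hg
  have hmap : Tendsto (fun t : ℝ => Real.sin t⁻¹) (𝓝[>] 0) (𝓝 (g 0)) :=
    Tendsto.mono_left (tendsto_map'_iff.2 hsin) nhdsGT_zero_le_map_norm
  refine not_tendsto_sin_atTop (g 0) ?_
  simpa only [comp_def, inv_inv] using hmap.comp tendsto_inv_atTop_nhdsGT_zero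

end ConnectedNorm

/-! ### Coordinates on the blown-up fibres -/

/-- `κ` is a value at `y` of the function `y ↦ (y + r * s) / (|y| + r)`, which blends `sign y` with
`s ∈ [-1, 1]` at scale `r ≥ 0`. Clearing the denominator makes the relation closed: for `r = 0` it
is the graph of `sign` with the jump at `y = 0` filled in by a vertical segment. -/
def IsBlendCoord (r s y κ : ℝ) : Prop := |κ| ≤ 1 ∧ κ * (|y| + r) = y + r * s

/-- The weight with which one step of the dynamics moves a blend coordinate towards `s`: along
`y ↦ y / (1 + |y|)` the quotient `(y + r * s) / (|y| + r)` becomes its convex combination with `s`,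
with weight `mixWeight r y` on `s`. -/
def mixWeight (r y : ℝ) : ℝ := r * |y| / (|y| + r + r * |y|)

section MixWeight

variable {r : ℝ}

lemma mixWeight_nonneg (hr : 0 ≤ r) (y : ℝ) : 0 ≤ mixWeight r y := by
  unfold mixWeight; positivity

lemma mixWeight_lt_one (hr : 0 ≤ r) (y : ℝ) : mixWeight r y < 1 := by
  have hsum : 0 ≤ |y| + r := by positivity
  rcases hsum.eq_or_lt with hzero | hpos
  · obtain rfl : r = 0 := by linarith [abs_nonneg y]
    simp [mixWeight]
  · rw [mixWeight, div_lt_one (by positivity)]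
    linarith

lemma mixWeight_le (hr : 0 ≤ r) (y : ℝ) : mixWeight r y ≤ r := by
  refine div_le_of_le_mul₀ (by positivity) hr ?_
  nlinarith [mul_nonneg hr hr, mul_nonneg (mul_nonneg hr hr) (abs_nonneg y)]

lemma mixWeight_mul (hr : 0 ≤ r) (y : ℝ) : mixWeight r y * (|y| + r + r * |y|) = r * |y| := by
  refine div_mul_cancel_of_imp fun hzero => ?_
  have hprod : 0 ≤ r * |y| := by positivity
  linarith [abs_nonneg y]

end MixWeight

namespace IsBlendCoord

variable {r s y y' κ κ' : ℝ}

lemma of_pos (hr : 0 < r) (hs : |s| ≤ 1) (y : ℝ) :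
    IsBlendCoord r s y ((y + r * s) / (|y| + r)) := by
  have hden : 0 < |y| + r := by positivity
  refine ⟨?_, div_mul_cancel₀ _ hden.ne'⟩
  rw [abs_div, abs_of_pos hden, div_le_one hden]
  calc |y + r * s| ≤ |y| + |r * s| := abs_add_le _ _
    _ = |y| + r * |s| := by rw [abs_mul, abs_of_pos hr]
    _ ≤ |y| + r := by gcongr; exact mul_le_of_le_one_right hr.le hs

lemma unique (h : IsBlendCoord r s y κ) (h' : IsBlendCoord r s y κ') (hne : |y| + r ≠ 0) :
    κ = κ' :=
  mul_right_cancel₀ hne (h.2.trans h'.2.symm)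

lemma zero_iff (hr : r ≠ 0) (hs : |s| ≤ 1) : IsBlendCoord r s 0 κ ↔ κ = s := by
  simp only [IsBlendCoord, abs_zero, zero_add, mul_comm r s, mul_left_inj' hr]
  exact ⟨And.right, fun h => ⟨h ▸ hs, h⟩⟩

lemma le_of_lt (hr : 0 ≤ r) (h : IsBlendCoord r s y κ) (h' : IsBlendCoord r s y' κ')
    (hy : y < y') : κ ≤ κ' := by
  have hslope {c : ℝ} (hc : |c| ≤ 1) : c * (|y'| - |y|) ≤ y' - y :=
    calc c * (|y'| - |y|) ≤ |c| * |(|y'| - |y|)| := by rw [← abs_mul]; exact le_abs_self _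
      _ ≤ 1 * |y' - y| :=
        mul_le_mul hc (abs_abs_sub_abs_le _ _) (abs_nonneg _) zero_le_one
      _ = y' - y := by rw [one_mul, abs_of_pos (sub_pos.2 hy)]
  have hpos : 0 < |y| + |y'| + 2 * r := by
    have hdist : |y' - y| ≤ |y'| + |y| := abs_sub _ _
    linarith [abs_pos.2 (sub_pos.2 hy).ne']
  have hprod : 0 ≤ (κ' - κ) * (|y| + |y'| + 2 * r) := by
    linear_combination hslope h.1 + hslope h'.1 + 2 * h.2 - 2 * h'.2
  linarith [nonneg_of_mul_nonneg_left hprod hpos]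

lemma step (hr : 0 ≤ r) (hs : |s| ≤ 1) (h : IsBlendCoord r s y κ) :
    IsBlendCoord r s (y / (1 + |y|)) ((1 - mixWeight r y) * κ + mixWeight r y * s) := by
  have hm0 := mixWeight_nonneg hr y
  have hm1 := (mixWeight_lt_one hr y).le
  have hden : 0 < 1 + |y| := by positivity
  constructor
  · rw [← Real.norm_eq_abs, ← mem_closedBall_zero_iff]
    exact convex_closedBall (0 : ℝ) 1 (by simpa using h.1) (by simpa using hs)
      (sub_nonneg.2 hm1) hm0 (sub_add_cancel _ _)
  · rw [abs_div, abs_of_pos hden]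
    field_simp
    linear_combination h.2 + (s - κ) * mixWeight_mul hr y

end IsBlendCoord

section Continuity

variable {X : Type*} [TopologicalSpace X]

lemma continuous_of_norm_le {E : Type*} [NormedAddCommGroup E] {g : X → E} {r : X → ℝ}
    (hr : Continuous r) (hgr : ∀ x, ‖g x‖ ≤ r x) (hg : ∀ x, r x ≠ 0 → ContinuousAt g x) :
    Continuous g := by
  refine continuous_iff_continuousAt.2 fun x => ?_
  by_cases hx : r x = 0
  · have hgx : g x = 0 := norm_le_zero_iff.1 (hx ▸ hgr x)
    rw [ContinuousAt, hgx]
    exact squeeze_zero_norm hgr (hx ▸ hr.tendsto x)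
  · exact hg x hx

variable {r s y : X → ℝ}

lemma continuous_mul_of_continuousAt (hr : Continuous r) (hs1 : ∀ x, |s x| ≤ 1)
    (hs : ∀ x, r x ≠ 0 → ContinuousAt s x) : Continuous fun x => r x * s x := by
  refine continuous_of_norm_le hr.abs (fun x => ?_) fun x hx =>
    hr.continuousAt.mul (hs x (abs_ne_zero.1 hx))
  rw [Real.norm_eq_abs, abs_mul]
  exact mul_le_of_le_one_right (abs_nonneg _) (hs1 x)

lemma continuousAt_mixWeight {x : X} (hr : ContinuousAt r x) (hy : ContinuousAt y x)
    (hx : 0 < r x) : ContinuousAt (fun x => mixWeight (r x) (y x)) x := by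
  have hden : |y x| + r x + r x * |y x| ≠ 0 := by positivity
  exact (hr.mul hy.abs).div ((hy.abs.add hr).add (hr.mul hy.abs)) hden

lemma continuous_mixWeight_mul (hr : Continuous r) (hr0 : ∀ x, 0 ≤ r x) (hy : Continuous y)
    (hs1 : ∀ x, |s x| ≤ 1) (hs : ∀ x, r x ≠ 0 → ContinuousAt s x) :
    Continuous fun x => mixWeight (r x) (y x) * s x := by
  refine continuous_of_norm_le hr (fun x => ?_) fun x hx =>
    (continuousAt_mixWeight hr.continuousAt hy.continuousAt ((hr0 x).lt_of_ne' hx)).mul (hs x hx)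
  rw [norm_mul, Real.norm_of_nonneg (mixWeight_nonneg (hr0 x) _)]
  exact (mul_le_of_le_one_right (mixWeight_nonneg (hr0 x) _) (hs1 x)).trans
    (mixWeight_le (hr0 x) _)

lemma continuous_mixWeight (hr : Continuous r) (hr0 : ∀ x, 0 ≤ r x) (hy : Continuous y) :
    Continuous fun x => mixWeight (r x) (y x) := by
  simpa only [mul_one] using continuous_mixWeight_mul (s := fun _ => 1) hr hr0 hy
    (fun _ => abs_one.le) fun _ _ => continuousAt_const

end Continuity

lemma strictMono_div_one_add_abs : StrictMono fun y : ℝ => y / (1 + |y|) := by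
  refine strictMono_of_odd_strictMonoOn_nonneg (fun y => by rw [abs_neg, neg_div]) ?_
  intro y (hy : 0 ≤ y) y' (hy' : 0 ≤ y') hlt
  simp only [abs_of_nonneg hy, abs_of_nonneg hy']
  rw [div_lt_div_iff₀ (by positivity) (by positivity)]
  linarith

lemma abs_div_one_add_abs_lt_one (y : ℝ) : |y / (1 + |y|)| < 1 := by
  have hden : 0 < 1 + |y| := by positivity
  rw [abs_div, abs_of_pos hden, div_lt_one hden]
  exact lt_one_add _

/-! ### The blow-up of an orbit -/

/-- Weights for summing the blend coordinates of a point into a single fibre coordinate. -/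
def blendWeight : ℤ → ℝ := (posSumOfEncodable (one_pos : (0 : ℝ) < 1) ℤ).1

lemma blendWeight_pos (n : ℤ) : 0 < blendWeight n :=
  (posSumOfEncodable (one_pos : (0 : ℝ) < 1) ℤ).2.1 n

lemma exists_hasSum_blendWeight : ∃ c, HasSum blendWeight c ∧ c ≤ 1 :=
  (posSumOfEncodable (one_pos : (0 : ℝ) < 1) ℤ).2.2

lemma summable_blendWeight : Summable blendWeight :=
  let ⟨_, hsum, _⟩ := exists_hasSum_blendWeight
  hsum.summable

section WeightedSum

variable {κ κ' : ℤ → ℝ}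

lemma norm_blendWeight_mul_le (hκ : ∀ n, |κ n| ≤ 1) (n : ℤ) :
    ‖blendWeight n * κ n‖ ≤ blendWeight n := by
  rw [norm_mul, Real.norm_of_nonneg (blendWeight_pos n).le]
  exact mul_le_of_le_one_right (blendWeight_pos n).le (hκ n)

lemma summable_blendWeight_mul (hκ : ∀ n, |κ n| ≤ 1) : Summable fun n => blendWeight n * κ n :=
  .of_norm_bounded summable_blendWeight (norm_blendWeight_mul_le hκ)

lemma abs_tsum_blendWeight_mul_le (hκ : ∀ n, |κ n| ≤ 1) : |∑' n, blendWeight n * κ n| ≤ 1 := by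
  obtain ⟨c, hc, hc1⟩ := exists_hasSum_blendWeight
  exact (tsum_of_norm_bounded hc (norm_blendWeight_mul_le hκ)).trans hc1

lemma tsum_blendWeight_mul_lt (hκ : ∀ n, |κ n| ≤ 1) (hκ' : ∀ n, |κ' n| ≤ 1) (hlt : κ < κ') :
    ∑' n, blendWeight n * κ n < ∑' n, blendWeight n * κ' n := by
  obtain ⟨hle, n, hn⟩ := Pi.lt_def.1 hlt
  exact (summable_blendWeight_mul hκ).tsum_lt_tsum
    (fun m => mul_le_mul_of_nonneg_left (hle m) (blendWeight_pos m).le)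
    (mul_lt_mul_of_pos_left hn (blendWeight_pos n)) (summable_blendWeight_mul hκ')

end WeightedSum

section Orbit

variable {Θ : Type*} [NormedAddCommGroup Θ]

/-- The distance from `θ` to the `n`-th point `n • a` of the blown-up orbit. -/
def orbitDist (a : Θ) (n : ℤ) (θ : Θ) : ℝ := ‖θ - n • a‖

/-- The oscillation with which fibres accumulate on the blown-up fibre over `n • a`. At `n • a`
itself it has the junk value `sin 0⁻¹ = 0`, which only enters multiplied by `orbitDist a n θ = 0`
or by a vanishing `mixWeight`. -/
def orbitOsc (a : Θ) (n : ℤ) (θ : Θ) : ℝ := Real.sin (orbitDist a n θ)⁻¹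

variable {a : Θ} (n : ℤ) (θ : Θ)

lemma orbitDist_nonneg : 0 ≤ orbitDist a n θ := norm_nonneg _

lemma orbitDist_eq_zero_iff : orbitDist a n θ = 0 ↔ θ = n • a := norm_sub_eq_zero_iff

lemma orbitDist_pos_of_notMem_range (hθ : θ ∉ range fun n : ℤ => n • a) : 0 < orbitDist a n θ :=
  (orbitDist_nonneg n θ).lt_of_ne' fun h => hθ ⟨n, ((orbitDist_eq_zero_iff n θ).1 h).symm⟩

lemma orbitDist_add : orbitDist a n (θ + a) = orbitDist a (n - 1) θ := by
  rw [orbitDist, orbitDist, sub_smul, one_smul]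
  congr 1
  abel

lemma orbitOsc_add : orbitOsc a n (θ + a) = orbitOsc a (n - 1) θ := by
  rw [orbitOsc, orbitOsc, orbitDist_add]

lemma abs_orbitOsc_le_one : |orbitOsc a n θ| ≤ 1 := Real.abs_sin_le_one _

@[fun_prop]
lemma continuous_orbitDist : Continuous (orbitDist a n) := by
  unfold orbitDist; fun_prop

lemma continuousAt_orbitOsc {θ : Θ} (hθ : orbitDist a n θ ≠ 0) :
    ContinuousAt (orbitOsc a n) θ :=
  Real.continuous_sin.continuousAt.comp ((continuous_orbitDist n).continuousAt.inv₀ hθ)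

end Orbit

/-! ### The blown-up system -/

/-- The blow-up of the points `(n • a, 0)` of `Θ × ℝ` to vertical segments: besides the base point
`θ` and the level `y`, a point carries a blend coordinate `κ n` for every `n : ℤ`. -/
abbrev BlowUp {Θ : Type*} [NormedAddCommGroup Θ] (a : Θ) : Type _ :=
  {z : Θ × ℝ × (ℤ → ℝ) //
    ∀ n, IsBlendCoord (orbitDist a n z.1) (orbitOsc a n z.1) z.2.1 (z.2.2 n)}

namespace BlowUp

variable {Θ : Type*} [NormedAddCommGroup Θ] {a : Θ} {z z' : BlowUp a}

/-- The base point `θ` of a point of the blow-up. -/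
abbrev base (z : BlowUp a) : Θ := z.1.1

/-- The position `(y, κ)` in its fibre of a point of the blow-up, with the product order. -/
abbrev fibre (z : BlowUp a) : ℝ × (ℤ → ℝ) := z.1.2

/-- The coordinate `y` that the projection of the blow-up to `Θ × ℝ` retains. -/
abbrev level (z : BlowUp a) : ℝ := z.1.2.1

/-- The blend coordinates `κ` of a point of the blow-up. -/
abbrev coord (z : BlowUp a) : ℤ → ℝ := z.1.2.2

lemma abs_coord_le_one (z : BlowUp a) (n : ℤ) : |z.coord n| ≤ 1 := (z.2 n).1

lemma isClosed_setOf_isBlendCoord (a : Θ) : IsClosed {z : Θ × ℝ × (ℤ → ℝ) |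
    ∀ n, IsBlendCoord (orbitDist a n z.1) (orbitOsc a n z.1) z.2.1 (z.2.2 n)} := by
  simp only [IsBlendCoord, ofPred_forall, ofPred_and]
  refine isClosed_iInter fun n => ?_
  have hmul : Continuous fun θ => orbitDist a n θ * orbitOsc a n θ :=
    continuous_mul_of_continuousAt (continuous_orbitDist n) (abs_orbitOsc_le_one n)
      fun _ => continuousAt_orbitOsc n
  exact (isClosed_le (by fun_prop) continuous_const).inter
    (isClosed_eq (by fun_prop) (continuous_snd.fst.add (hmul.comp continuous_fst)))

/-! ### The total order of the fibres -/

lemma base_eq_of_coord_ne (hbase : z.base = z'.base) (hlevel : z.level = z'.level) {n : ℤ}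
    (hne : z.coord n ≠ z'.coord n) : z.base = n • a := by
  have hn' := z'.2 n
  rw [← base, ← level, ← hbase, ← hlevel] at hn'
  have hzero : |z.level| + orbitDist a n z.base = 0 := by
    by_contra hden
    exact hne ((z.2 n).unique hn' hden)
  rw [← orbitDist_eq_zero_iff]
  linarith [abs_nonneg z.level, orbitDist_nonneg (a := a) n z.base]

lemma coord_le_of_level_lt (hbase : z.base = z'.base) (hlt : z.level < z'.level) :
    z.coord ≤ z'.coord := by
  intro n
  have hn' := z'.2 n
  rw [← base, ← hbase] at hn'
  exact (z.2 n).le_of_lt (orbitDist_nonneg n _) hn' hlt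

lemma fibre_le_total (ha : HasSparseOrbit a) (hbase : z.base = z'.base) :
    z.fibre ≤ z'.fibre ∨ z'.fibre ≤ z.fibre := by
  rcases lt_trichotomy z.level z'.level with hlt | hlevel | hlt
  · exact .inl ⟨hlt.le, coord_le_of_level_lt hbase hlt⟩
  · by_cases hle : z.coord ≤ z'.coord
    · exact .inl ⟨hlevel.le, hle⟩
    · obtain ⟨n, hn⟩ := not_forall.1 hle
      refine .inr ⟨hlevel.ge, fun m => ?_⟩
      by_contra hm
      have hmn : m = n := ha.injective <|
        (base_eq_of_coord_ne hbase hlevel fun h => hm h.ge).symm.trans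
          (base_eq_of_coord_ne hbase hlevel fun h => hn h.le)
      exact hm (hmn ▸ (not_le.1 hn).le)
  · exact .inr ⟨hlt.le, coord_le_of_level_lt hbase.symm hlt⟩

/-- The fibre coordinate in which the blow-up is again `Θ × ℝ`. -/
def height (z : BlowUp a) : ℝ := z.level + ∑' n, blendWeight n * z.coord n

lemma abs_height_sub_level_le_one (z : BlowUp a) : |z.height - z.level| ≤ 1 := by
  rw [height, add_sub_cancel_left]
  exact abs_tsum_blendWeight_mul_le z.abs_coord_le_one

lemma continuous_height : Continuous (height : BlowUp a → ℝ) := by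
  refine (by fun_prop : Continuous (level : BlowUp a → ℝ)).add ?_
  exact continuous_tsum (fun n => by fun_prop) summable_blendWeight
    fun n z => norm_blendWeight_mul_le z.abs_coord_le_one n

lemma height_lt_of_fibre_lt (hlt : z.fibre < z'.fibre) : z.height < z'.height := by
  have hcoord : z.coord < z'.coord →
      ∑' n, blendWeight n * z.coord n < ∑' n, blendWeight n * z'.coord n :=
    tsum_blendWeight_mul_lt z.abs_coord_le_one z'.abs_coord_le_one
  rcases Prod.lt_iff.1 hlt with ⟨hlevel, hle⟩ | ⟨hlevel, hlt⟩
  · refine add_lt_add_of_lt_of_le hlevel ?_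
    rcases hle.eq_or_lt with heq | hlt
    · exact (congrArg (fun κ : ℤ → ℝ => ∑' n, blendWeight n * κ n) heq).le
    · exact (hcoord hlt).le
  · exact add_lt_add_of_le_of_lt hlevel (hcoord hlt)

lemma height_le_iff (ha : HasSparseOrbit a) (hbase : z.base = z'.base) :
    z.height ≤ z'.height ↔ z.fibre ≤ z'.fibre := by
  constructor
  · intro hheight
    rcases fibre_le_total ha hbase with hle | hle
    · exact hle
    · rcases hle.eq_or_lt with heq | hlt
      · exact heq.ge
      · exact absurd (height_lt_of_fibre_lt hlt) hheight.not_gt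
  · intro hle
    rcases hle.eq_or_lt with heq | hlt
    · rw [Subtype.ext (Prod.ext hbase heq)]
    · exact (height_lt_of_fibre_lt hlt).le

lemma eq_of_base_eq_of_height_eq (ha : HasSparseOrbit a) (hbase : z.base = z'.base)
    (hheight : z.height = z'.height) : z = z' :=
  Subtype.ext <| Prod.ext hbase <|
    ((height_le_iff ha hbase).1 hheight.le).antisymm ((height_le_iff ha hbase.symm).1 hheight.ge)

/-! ### The blow-up is homeomorphic to the product -/

/-- The coordinates on the blow-up that identify it with `Θ × ℝ`. -/
def toProd (z : BlowUp a) : Θ × ℝ := (z.base, z.height)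

lemma isProperMap_toProd : IsProperMap (toProd : BlowUp a → Θ × ℝ) := by
  have hcont : Continuous (toProd : BlowUp a → Θ × ℝ) :=
    (by fun_prop : Continuous (base : BlowUp a → Θ)).prodMk continuous_height
  refine isProperMap_iff_isCompact_preimage.2 ⟨hcont, fun K hK => ?_⟩
  have hbox : IsCompact ((Prod.fst '' K) ×ˢ Metric.cthickening 1 (Prod.snd '' K) ×ˢ
      univ.pi fun _ : ℤ => Icc (-1 : ℝ) 1) :=
    (hK.image continuous_fst).prod <| (hK.image continuous_snd).cthickening.prod <|
      isCompact_univ_pi fun _ => isCompact_Icc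
  refine ((isClosed_setOf_isBlendCoord a).isClosedEmbedding_subtypeVal.isCompact_preimage
    hbox).of_isClosed_subset (hK.isClosed.preimage hcont) fun (z : BlowUp a) hz => ?_
  refine ⟨mem_image_of_mem Prod.fst hz, ?_, fun n _ => abs_le.1 (z.abs_coord_le_one n)⟩
  refine Metric.mem_cthickening_of_dist_le _ _ _ _ (mem_image_of_mem Prod.snd hz) ?_
  rw [dist_comm]
  exact z.abs_height_sub_level_le_one

/-- The point of the blow-up at level `y` over a point `θ` off the orbit, where the blend
coordinates are determined by `y`. -/
def ofLevel {θ : Θ} (hθ : θ ∉ range fun n : ℤ => n • a) (y : ℝ) : BlowUp a :=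
  ⟨(θ, y, fun n => (y + orbitDist a n θ * orbitOsc a n θ) / (|y| + orbitDist a n θ)),
    fun n => .of_pos (orbitDist_pos_of_notMem_range n θ hθ) (abs_orbitOsc_le_one n θ) y⟩

lemma continuous_ofLevel {θ : Θ} (hθ : θ ∉ range fun n : ℤ => n • a) :
    Continuous (ofLevel hθ) := by
  refine Continuous.subtype_mk (continuous_const.prodMk <| continuous_id.prodMk <|
    continuous_pi fun n => ?_) _
  have hr := orbitDist_pos_of_notMem_range n θ hθ
  have hden (y : ℝ) : |y| + orbitDist a n θ ≠ 0 := by positivity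
  fun_prop (disch := exact hden _)

lemma mem_range_toProd {θ : Θ} (hθ : θ ∉ range fun n : ℤ => n • a) (x : ℝ) :
    (θ, x) ∈ range (toProd : BlowUp a → Θ × ℝ) := by
  have hbound (y : ℝ) := abs_le.1 (abs_height_sub_level_le_one (ofLevel hθ y))
  obtain ⟨y, hy⟩ : x ∈ range fun y => (ofLevel hθ y).height :=
    mem_range_of_exists_le_of_exists_ge (continuous_height.comp (continuous_ofLevel hθ))
      ⟨x - 1, by linarith [(hbound (x - 1)).2, show (ofLevel hθ (x - 1)).level = x - 1 from rfl]⟩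
      ⟨x + 1, by linarith [(hbound (x + 1)).1, show (ofLevel hθ (x + 1)).level = x + 1 from rfl]⟩
  exact ⟨ofLevel hθ y, Prod.ext rfl hy⟩

lemma bijective_toProd (ha : HasSparseOrbit a) :
    Bijective (toProd : BlowUp a → Θ × ℝ) := by
  refine ⟨fun z z' h => ?_, range_eq_univ.1 ?_⟩
  · obtain ⟨hbase, hheight⟩ := Prod.ext_iff.1 h
    exact eq_of_base_eq_of_height_eq ha hbase hheight
  · have hdense : DenseRange (toProd : BlowUp a → Θ × ℝ) :=
      (ha.dense_compl.prod dense_univ).mono fun p hp => mem_range_toProd hp.1 p.2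
    exact isProperMap_toProd.isClosedMap.isClosed_range.closure_eq.symm.trans hdense.closure_eq

/-- The homeomorphism of the blow-up with `Θ × ℝ`. -/
def homeo (ha : HasSparseOrbit a) : BlowUp a ≃ₜ Θ × ℝ :=
  (Equiv.ofBijective toProd (bijective_toProd ha)).toHomeomorphOfContinuousClosed
    isProperMap_toProd.continuous isProperMap_toProd.isClosedMap

/-! ### The dynamics on the blow-up -/

/-- The lift to the blow-up of the skew product `(θ, y) ↦ (θ + a, y / (1 + |y|))`. -/
def step (z : BlowUp a) : BlowUp a :=
  ⟨(z.base + a, z.level / (1 + |z.level|), fun n =>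
      (1 - mixWeight (orbitDist a (n - 1) z.base) z.level) * z.coord (n - 1) +
        mixWeight (orbitDist a (n - 1) z.base) z.level * orbitOsc a (n - 1) z.base), fun n => by
    rw [orbitDist_add, orbitOsc_add]
    exact (z.2 (n - 1)).step (orbitDist_nonneg _ _) (abs_orbitOsc_le_one _ _)⟩

lemma continuous_step : Continuous (step : BlowUp a → BlowUp a) := by
  refine Continuous.subtype_mk (Continuous.prodMk (by fun_prop) <| Continuous.prodMk ?_ <|
    continuous_pi fun n => ?_) _
  · have hden (z : BlowUp a) : 1 + |z.level| ≠ 0 := by positivity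
    fun_prop (disch := exact hden _)
  · have hr : Continuous fun z : BlowUp a => orbitDist a (n - 1) z.base := by fun_prop
    have hy : Continuous fun z : BlowUp a => z.level := by fun_prop
    have hr0 (z : BlowUp a) : 0 ≤ orbitDist a (n - 1) z.base := orbitDist_nonneg _ _
    refine ((continuous_const.sub (continuous_mixWeight hr hr0 hy)).mul (by fun_prop)).add ?_
    exact continuous_mixWeight_mul hr hr0 hy (fun z => abs_orbitOsc_le_one _ _)
      fun z hz => (continuousAt_orbitOsc _ hz).comp (by fun_prop)

lemma injective_step : Injective (step : BlowUp a → BlowUp a) := by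
  intro z z' h
  have hfibre := congrArg fibre h
  have hbase : z.base = z'.base := add_right_cancel (congrArg base h)
  have hlevel : z.level = z'.level :=
    strictMono_div_one_add_abs.injective (congrArg Prod.fst hfibre)
  refine Subtype.ext (Prod.ext hbase (Prod.ext hlevel (funext fun n => ?_)))
  have hcoord := congrFun (congrArg Prod.snd hfibre) (n + 1)
  have hm : mixWeight (orbitDist a n z.base) z.level < 1 :=
    mixWeight_lt_one (orbitDist_nonneg _ _) _
  simp only [step, add_sub_cancel_right, ← hbase, ← hlevel, add_left_inj] at hcoord
  exact mul_left_cancel₀ (sub_pos.2 hm).ne' hcoord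

lemma fibre_step_le (hbase : z.base = z'.base) (hle : z.fibre ≤ z'.fibre) :
    z.step.fibre ≤ z'.step.fibre := by
  have hbase' : z.step.base = z'.step.base := congrArg (· + a) hbase
  obtain ⟨hlevel, hcoord⟩ := hle
  rcases hlevel.eq_or_lt with heq | hlt
  · refine ⟨strictMono_div_one_add_abs.monotone hlevel, fun n => ?_⟩
    have hm : 0 ≤ 1 - mixWeight (orbitDist a (n - 1) z.base) z.level :=
      sub_nonneg.2 (mixWeight_lt_one (orbitDist_nonneg _ _) _).le
    simp only [step, ← hbase, ← show z.level = z'.level from heq]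
    gcongr
    exact hcoord (n - 1)
  · have hlt' : z.step.level < z'.step.level := strictMono_div_one_add_abs hlt
    exact ⟨hlt'.le, coord_le_of_level_lt hbase' hlt'⟩

lemma height_step_lt (ha : HasSparseOrbit a) (hbase : z.base = z'.base)
    (hlt : z.height < z'.height) : z.step.height < z'.step.height := by
  have hbase' : z.step.base = z'.step.base := congrArg (· + a) hbase
  refine lt_of_le_of_ne ?_ fun heq => ?_
  · exact (height_le_iff ha hbase').2 (fibre_step_le hbase ((height_le_iff ha hbase).1 hlt.le))
  · rw [injective_step (eq_of_base_eq_of_height_eq ha hbase' heq)] at hlt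
    exact lt_irrefl _ hlt

lemma abs_height_step_lt_two (z : BlowUp a) : |z.step.height| < 2 := by
  have hlevel : |z.step.level| < 1 := abs_div_one_add_abs_lt_one _
  have hheight := z.step.abs_height_sub_level_le_one
  rw [abs_lt] at hlevel ⊢
  rw [abs_le] at hheight
  constructor <;> linarith

lemma natCast_mul_abs_level_iterate_step_le_one (z : BlowUp a) (n : ℕ) :
    n * |(step^[n] z).level| ≤ 1 := by
  induction n with
  | zero => simp
  | succ n ih =>
    rw [iterate_succ_apply']
    set y := (step^[n] z).level
    have hden : 0 < 1 + |y| := by positivity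
    change ((n + 1 : ℕ) : ℝ) * |y / (1 + |y|)| ≤ 1
    rw [abs_div, abs_of_pos hden, ← mul_div_assoc, div_le_one hden]
    push_cast
    linarith

lemma exists_step_eq_of_level_eq_zero (hz : z.level = 0) :
    ∃ z' : BlowUp a, z'.level = 0 ∧ z'.step = z := by
  refine ⟨⟨(z.base - a, 0, fun n => z.coord (n + 1)), fun n => ?_⟩, rfl, ?_⟩
  · have hn := z.2 (n + 1)
    rw [← base, ← level, hz, ← sub_add_cancel z.base a, orbitDist_add, orbitOsc_add,
      add_sub_cancel_right] at hn
    exact hn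
  · refine Subtype.ext (Prod.ext (sub_add_cancel _ _) (Prod.ext ?_ (funext fun n => ?_)))
    · simp [step, hz]
    · simp [step, mixWeight, coord, level]

/-! ### The forced interval map -/

section ForcedMap

variable (ha : HasSparseOrbit a)

/-- The point of the blow-up with given base point and height. -/
def lift (p : Θ × Icc (-2 : ℝ) 2) : BlowUp a := (homeo ha).symm (p.1, p.2)

/-- The map `step` in the coordinates base point and height. -/
def forcedMap (p : Θ × Icc (-2 : ℝ) 2) : Θ × Icc (-2 : ℝ) 2 :=
  (p.1 + a, ⟨(lift ha p).step.height, abs_le.1 (abs_height_step_lt_two _).le⟩)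

/-- The preimage of the invariant curve `y = 0`, which turns out to be the global attractor. -/
def zeroLevel : Set (Θ × Icc (-2 : ℝ) 2) := {p | (lift ha p).level = 0}

variable {ha}

lemma toProd_lift (p : Θ × Icc (-2 : ℝ) 2) : (lift ha p).toProd = (p.1, (p.2 : ℝ)) :=
  (homeo ha).apply_symm_apply _

@[simp]
lemma base_lift (p : Θ × Icc (-2 : ℝ) 2) : (lift ha p).base = p.1 :=
  congrArg Prod.fst (toProd_lift p)

@[simp]
lemma height_lift (p : Θ × Icc (-2 : ℝ) 2) : (lift ha p).height = p.2 :=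
  congrArg Prod.snd (toProd_lift p)

lemma injective_lift : Injective (lift ha) :=
  (homeo ha).symm.injective.comp (injective_id.prodMap Subtype.val_injective)

@[fun_prop]
lemma continuous_lift : Continuous (lift ha) :=
  (homeo ha).symm.continuous.comp (continuous_id.prodMap continuous_subtype_val)

lemma lift_forcedMap (p : Θ × Icc (-2 : ℝ) 2) : lift ha (forcedMap ha p) = (lift ha p).step := by
  refine eq_of_base_eq_of_height_eq ha ?_ (height_lift _)
  rw [base_lift]
  exact congrArg (· + a) (base_lift p).symm

lemma forcedIncreasing_forcedMap : ForcedIncreasing (fun θ => θ + a) (forcedMap ha) := by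
  refine ⟨?_, fun _ => rfl, fun θ x x' hlt => ?_⟩
  · exact (by fun_prop : Continuous fun p : Θ × Icc (-2 : ℝ) 2 => p.1 + a).prodMk <|
      (continuous_height.comp (continuous_step.comp continuous_lift)).subtype_mk _
  · refine height_step_lt ha ?_ ?_
    · rw [base_lift, base_lift]
    · rwa [height_lift, height_lift]

lemma forcedMap_snd_mem_interior (p : Θ × Icc (-2 : ℝ) 2) :
    ((forcedMap ha p).2 : ℝ) ∈ interior (Icc (-2 : ℝ) 2) := by
  rw [interior_Icc]
  exact abs_lt.1 (abs_height_step_lt_two _)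

/-! ### The attractor -/

lemma exists_mem_zeroLevel_lift_eq (ha : HasSparseOrbit a) (hz : z.level = 0) :
    ∃ p ∈ zeroLevel ha, lift ha p = z := by
  have hheight : |z.height| ≤ 2 := by
    have hle := z.abs_height_sub_level_le_one
    rw [hz, sub_zero] at hle
    linarith
  have hlift : lift ha (z.base, ⟨z.height, abs_le.1 hheight⟩) = z :=
    (homeo ha).symm_apply_apply z
  exact ⟨_, (congrArg level hlift).trans hz, hlift⟩

lemma image_forcedMap_zeroLevel (ha : HasSparseOrbit a) :
    forcedMap ha '' zeroLevel ha = zeroLevel ha := by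
  refine Subset.antisymm ?_ fun p hp => ?_
  · rintro _ ⟨p, hp : (lift ha p).level = 0, rfl⟩
    rw [zeroLevel, mem_ofPred_eq, lift_forcedMap]
    simp [step, hp]
  · obtain ⟨z, hz, hstep⟩ := exists_step_eq_of_level_eq_zero hp
    obtain ⟨q, hq, rfl⟩ := exists_mem_zeroLevel_lift_eq ha hz
    exact ⟨q, hq, injective_lift ((lift_forcedMap q).trans hstep)⟩

lemma iInter_iterate_image_forcedMap (ha : HasSparseOrbit a) :
    ⋂ n : ℕ, (forcedMap ha)^[n] '' univ = zeroLevel ha := by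
  refine Subset.antisymm (fun p hp => ?_)
    (subset_iInter_iterate_image (image_forcedMap_zeroLevel ha))
  have hdecay (n : ℕ) : n * |(lift ha p).level| ≤ 1 := by
    obtain ⟨q, -, rfl⟩ := mem_iInter.1 hp n
    have hsemi : Semiconj (lift ha) (forcedMap ha) step := lift_forcedMap
    rw [hsemi.iterate_right n q]
    exact natCast_mul_abs_level_iterate_step_le_one _ n
  by_contra hne
  obtain ⟨n, hn⟩ := exists_lt_nsmul (abs_pos.2 hne) 1
  exact (hdecay n).not_gt (nsmul_eq_mul n |(lift ha p).level| ▸ hn)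

lemma isClosed_zeroLevel (ha : HasSparseOrbit a) : IsClosed (zeroLevel ha) :=
  isClosed_eq (by fun_prop) continuous_const

lemma coord_lift_eq_orbitOsc {p : Θ × Icc (-2 : ℝ) 2} (hp : p ∈ zeroLevel ha) {n : ℤ}
    (hn : p.1 ≠ n • a) : (lift ha p).coord n = orbitOsc a n p.1 := by
  have hblend := (lift ha p).2 n
  rw [← base, ← level, base_lift, show (lift ha p).level = 0 from hp] at hblend
  exact (IsBlendCoord.zero_iff ((orbitDist_eq_zero_iff n p.1).not.2 hn)
    (abs_orbitOsc_le_one n p.1)).1 hblend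

lemma pinched_zeroLevel (ha : HasSparseOrbit a) : Pinched (zeroLevel ha) := by
  obtain ⟨θ, hθ⟩ := ha.dense_compl.nonempty
  obtain ⟨⟨θ', x⟩, hx, hlift⟩ :=
    exists_mem_zeroLevel_lift_eq ha (show (ofLevel hθ 0).level = 0 from rfl)
  obtain rfl : θ' = θ := (base_lift _).symm.trans (congrArg base hlift)
  refine ⟨θ', x, hx, fun x' hx' => ?_⟩
  have hcoord : (lift ha (θ', x')).coord = (lift ha (θ', x)).coord := by
    funext n
    have hn : θ' ≠ n • a := fun h => hθ ⟨n, h.symm⟩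
    rw [coord_lift_eq_orbitOsc hx' hn, coord_lift_eq_orbitOsc hx hn]
  have hlift' : lift ha (θ', x') = lift ha (θ', x) :=
    Subtype.ext <| Prod.ext ((base_lift (θ', x')).trans (base_lift (θ', x)).symm) <|
      Prod.ext (hx'.trans hx.symm) hcoord
  exact congrArg Prod.snd (injective_lift hlift')

lemma not_curveGraph_subset_zeroLevel [PreconnectedSpace Θ] [Nontrivial Θ]
    {η : Θ → Icc (-2 : ℝ) 2} (hη : Continuous η) : ¬ curveGraph η ⊆ zeroLevel ha := by
  intro hsub
  have hcont : Continuous fun θ => (lift ha (θ, η θ)).coord 0 := by fun_prop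
  refine not_continuous_of_eq_sin_inv_norm (fun θ hθ => ?_) hcont
  have hmem : (θ, η θ) ∈ zeroLevel ha := hsub rfl
  rw [coord_lift_eq_orbitOsc hmem (by rwa [zero_smul]), orbitOsc, orbitDist, zero_smul, sub_zero]

end ForcedMap

end BlowUp

theorem stmt5_general {Θ : Type} [NormedAddCommGroup Θ] [CompactSpace Θ] [PreconnectedSpace Θ]
    [Nontrivial Θ] {a : Θ} (ha : DenseRange fun n : ℤ => n • a) :
    ∃ I : Set ℝ, IsCompact I ∧ I.OrdConnected ∧
      ∃ fhat : Θ × ↥I → Θ × ↥I,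
        ForcedIncreasing (fun θ : Θ => θ + a) fhat ∧
        (∀ η : Θ → ↥I, Continuous η → fhat '' curveGraph η ≠ curveGraph η) ∧
        (∀ p : Θ × ↥I, ((fhat p).2 : ℝ) ∈ interior I) ∧
        Pinched (⋂ n : ℕ, fhat^[n] '' Set.univ) ∧
        ∃ M : Set (Θ × ↥I), M ⊆ (⋂ n : ℕ, fhat^[n] '' Set.univ) ∧
          IsAAMinimal fhat M ∧
          ∀ M' : Set (Θ × ↥I), M' ⊆ (⋂ n : ℕ, fhat^[n] '' Set.univ) →
            IsMinimalSet fhat M' → M' = M := by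
  have hsparse := hasSparseOrbit_of_denseRange ha
  have hforced := BlowUp.forcedIncreasing_forcedMap (ha := hsparse)
  have hattractor := BlowUp.iInter_iterate_image_forcedMap hsparse
  refine ⟨Icc (-2) 2, isCompact_Icc, ordConnected_Icc, BlowUp.forcedMap hsparse, hforced, ?_,
    BlowUp.forcedMap_snd_mem_interior, ?_⟩
  · intro η hη hinv
    exact BlowUp.not_curveGraph_subset_zeroLevel hη
      ((subset_iInter_iterate_image hinv).trans hattractor.subset)
  · rw [hattractor]
    have hpinched := BlowUp.pinched_zeroLevel hsparse
    exact ⟨hpinched, hpinched.exists_unique_isAAMinimal (α := Homeomorph.addRight a)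
      hforced.1 hforced.2.1 (denseRange_iterate_addRight ha)
      (uniformEquicontinuous_zIter_addRight a) (BlowUp.isClosed_zeroLevel hsparse).isCompact
      (BlowUp.image_forcedMap_zeroLevel hsparse)⟩

lemma denseRange_zsmul_coe_of_irrational {ρ : ℝ} (hρ : Irrational ρ) :
    DenseRange fun n : ℤ => n • (ρ : T1) :=
  (AddCircle.denseRange_zsmul_coe_iff (a := ρ) (p := 1)).2 (by rwa [div_one])

instance : Nontrivial T1 := by
  refine nontrivial_of_ne ((1 / 2 : ℝ) : T1) 0 fun h => ?_
  have hnorm := AddCircle.norm_half_period_eq (1 : ℝ)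
  rw [h] at hnorm
  norm_num at hnorm

/-- a quasiperiodically forced increasing interval map with no continuous
invariant curves, mapping the annulus strictly inside itself, whose global attractor is
pinched and contains a unique minimal set, which is almost automorphic. -/
theorem stmt5 :
    ∃ I : Set ℝ, IsCompact I ∧ I.OrdConnected ∧
      ∃ ρ : ℝ, Irrational ρ ∧
        ∃ fhat : T1 × ↥I → T1 × ↥I,
          ForcedIncreasing (fun θ : T1 => θ + (ρ : T1)) fhat ∧
          (∀ η : T1 → ↥I, Continuous η → fhat '' curveGraph η ≠ curveGraph η) ∧
          (∀ p : T1 × ↥I, ((fhat p).2 : ℝ) ∈ interior I) ∧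
          Pinched (⋂ n : ℕ, fhat^[n] '' Set.univ) ∧
          ∃ M : Set (T1 × ↥I), M ⊆ (⋂ n : ℕ, fhat^[n] '' Set.univ) ∧
            IsAAMinimal fhat M ∧
            ∀ M' : Set (T1 × ↥I), M' ⊆ (⋂ n : ℕ, fhat^[n] '' Set.univ) →
              IsMinimalSet fhat M' → M' = M := by
  obtain ⟨I, hI, hconn, fhat, hfhat⟩ :=
    stmt5_general (denseRange_zsmul_coe_of_irrational irrational_sqrt_two)
  exact ⟨I, hI, hconn, √2, irrational_sqrt_two, fhat, hfhat⟩

end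
end

section
/- There exists a quasiperiodically forced interval map F̂ : T¹ × I → T¹ × I (continuous skew product over an irrational rotation, fibre maps not necessarily monotone) which has a three-periodic continuous curve, i.e. a continuous γ : T¹ → I whose graph Γ satisfies F̂³(Γ) = Γ and F̂(Γ) ≠ Γ, but which has no invariant continuous curve: there is no continuous η : T¹ → I with F̂({(θ,η(θ))}) = {(θ,η(θ))}. -/
open Set Function MeasureTheory

noncomputable section

/-! A forced map with a 3-cycle `0 ↦ 3 ↦ -1 ↦ 0` common to all fibre maps has three constant curves
of period three, and an invariant curve meets none of them: by minimality of the third power of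
the rotation it would coincide with the one it meets. If moreover the fibre maps are positive on
`(-1, 0)`, an invariant curve lies in `T¹ × (0, 3)`, hence avoids every point sent to height `≤ 0`
or `3`. It remains to arrange that these points block every curve. The zigzag descends from `(0, 3)`
to `(1, 1)`, climbs to `(2, 2)` and descends to `(3, -1)`. Shift it down by `s`, which runs over
`[0, 2]` along half of the circle, scale by `3` and truncate. A curve through the allowed points
must start above `2` at `s = 0`, cannot cross `2` while `s ≤ 1`, cannot cross `1` while `1 ≤ s`,
and yet must end below `1` at `s = 2`. -/

section SkewProduct

variable {Θ : Type*} {I : Set ℝ} {α : Θ → Θ} {f : Θ × ↥I → Θ × ↥I} {η ζ : Θ → ↥I}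

lemma image_curveGraph_eq_iff (hα : Surjective α) (hf : ∀ p, (f p).1 = α p.1) :
    f '' curveGraph η = curveGraph ζ ↔ ∀ θ, f (θ, η θ) = (α θ, ζ (α θ)) := by
  constructor
  · intro h θ
    have hmem : f (θ, η θ) ∈ curveGraph ζ := h ▸ mem_image_of_mem f rfl
    have hsnd : (f (θ, η θ)).2 = ζ (f (θ, η θ)).1 := hmem
    exact Prod.ext (hf _) (hf (θ, η θ) ▸ hsnd)
  · refine fun h => Subset.antisymm ?_ ?_
    · rintro _ ⟨⟨θ, x⟩, hx : x = η θ, rfl⟩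
      rw [hx, h θ]
      rfl
    · rintro ⟨θ', x⟩ (hx : x = ζ θ')
      obtain ⟨θ, rfl⟩ := hα θ'
      exact ⟨(θ, η θ), rfl, hx ▸ h θ⟩

lemma fst_iterate (hf : ∀ p, (f p).1 = α p.1) (m : ℕ) (p : Θ × ↥I) :
    (f^[m] p).1 = α^[m] p.1 :=
  Semiconj.iterate_right (f := Prod.fst) hf m p

lemma eq_univ_of_isClosed_of_mapsTo [TopologicalSpace Θ] {S : Set Θ} {θ : Θ} (hS : IsClosed S)
    (hα : MapsTo α S S) (hθ : θ ∈ S) (hdense : DenseRange fun n : ℕ => α^[n] θ) : S = univ := by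
  rw [← hS.closure_eq]
  exact (hdense.mono <| range_subset_iff.2 fun n => hα.iterate n hθ).closure_eq

lemma eq_of_image_eq_of_image_iterate_eq [TopologicalSpace Θ] {m : ℕ} {θ : Θ}
    (hα : Surjective α) (hf : ∀ p, (f p).1 = α p.1)
    (hdense : DenseRange fun n : ℕ => (α^[m])^[n] θ) (hη : Continuous η) (hζ : Continuous ζ)
    (hfη : f '' curveGraph η = curveGraph η) (hfζ : f^[m] '' curveGraph ζ = curveGraph ζ)
    (hθ : η θ = ζ θ) : η = ζ := by
  have hη_iter : ∀ t, f^[m] (t, η t) = (α^[m] t, η (α^[m] t)) := fun t =>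
    (Semiconj.iterate_right (f := fun t => (t, η t))
      (fun t => ((image_curveGraph_eq_iff hα hf).1 hfη t).symm) m t).symm
  have hζ_iter := (image_curveGraph_eq_iff (hα.iterate m) (fst_iterate hf m)).1 hfζ
  have hmaps : MapsTo α^[m] {t | η t = ζ t} {t | η t = ζ t} := fun t (ht : η t = ζ t) => by
    have h := hζ_iter t
    rw [← ht, hη_iter] at h
    exact congrArg Prod.snd h
  exact funext <| eq_univ_iff_forall.1 <|
    eq_univ_of_isClosed_of_mapsTo (isClosed_eq hη hζ) hmaps hθ hdense

end SkewProduct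

lemma denseRange_iterate_iterate_add_right {p a : ℝ} [Fact (0 < p)] (ha : Irrational (a / p))
    {m : ℕ} (hm : m ≠ 0) (θ : AddCircle p) :
    DenseRange fun n : ℕ => ((· + (a : AddCircle p))^[m])^[n] θ := by
  have hdense : DenseRange fun n : ℕ => n • ((m * a : ℝ) : AddCircle p) := by
    rw [← denseRange_zsmul_iff_nsmul, AddCircle.denseRange_zsmul_coe_iff, mul_div_assoc]
    exact ha.natCast_mul hm
  have horbit : (fun n : ℕ => ((· + (a : AddCircle p))^[m])^[n] θ) =
      (θ + ·) ∘ fun n : ℕ => n • ((m * a : ℝ) : AddCircle p) := by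
    funext n
    simp only [add_right_iterate, comp_apply, ← nsmul_eq_mul, AddCircle.coe_nsmul]
  rw [horbit]
  exact (Homeomorph.addLeft θ).surjective.denseRange.comp hdense (by fun_prop)

lemma forall_lt_of_isPreconnected {X Y : Type*} [TopologicalSpace X] [LinearOrder Y]
    [TopologicalSpace Y] [OrderClosedTopology Y] {S : Set X} {g : X → Y} {a : X} {c : Y}
    (hS : IsPreconnected S) (hg : ContinuousOn g S) (hne : ∀ x ∈ S, g x ≠ c) (ha : a ∈ S)
    (hac : c < g a) : ∀ x ∈ S, c < g x := by
  intro x hx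
  by_contra! hxc
  obtain ⟨y, hy, hyc⟩ := hS.intermediate_value hx ha hg ⟨hxc, hac.le⟩
  exact hne y hy hyc

section Zigzag

/-- The piecewise linear function with vertices `(1, 1)` and `(2, 2)` and slopes `-2`, `1`, `-3`,
whose shifts produce the fibre maps of the example. -/
def zigzag (x : ℝ) : ℝ := max (3 - 2 * x) (min x (8 - 3 * x))

@[fun_prop]
lemma continuous_zigzag : Continuous zigzag := by
  unfold zigzag
  fun_prop

lemma zigzag_one : zigzag 1 = 1 := by norm_num [zigzag]

lemma zigzag_two : zigzag 2 = 2 := by norm_num [zigzag]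

lemma one_le_zigzag {x : ℝ} (hx : x ≤ 2) : 1 ≤ zigzag x := by
  rcases le_total x 1 with h | h
  · exact le_max_of_le_left (by linarith)
  · exact le_max_of_le_right (le_min h (by linarith))

lemma zigzag_le_two {x : ℝ} (hx : 1 ≤ x) : zigzag x ≤ 2 := by
  refine max_le (by linarith) ?_
  rcases le_total x 2 with h | h
  · exact min_le_of_left_le h
  · exact min_le_of_right_le (by linarith)

lemma exists_zigzag_sub_notMem_Ioo {x : ℝ → ℝ} (hx : ContinuousOn x (Icc 0 2)) :
    ∃ s ∈ Icc (0 : ℝ) 2, zigzag (x s) - s ∉ Ioo 0 1 := by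
  by_contra! h
  have hx0 : 2 < x 0 := by
    by_contra! hle
    linarith [one_le_zigzag hle, (h 0 (by norm_num)).2]
  have hne_two : ∀ s ∈ Icc (0 : ℝ) 1, x s ≠ 2 := fun s hs hxs => by
    have hlt := (h s ⟨hs.1, hs.2.trans one_le_two⟩).2
    rw [hxs, zigzag_two] at hlt
    linarith [hs.2]
  have hne_one : ∀ s ∈ Icc (1 : ℝ) 2, x s ≠ 1 := fun s hs hxs => by
    have hlt := (h s ⟨zero_le_one.trans hs.1, hs.2⟩).1
    rw [hxs, zigzag_one] at hlt
    linarith [hs.1]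
  have hx1 : 2 < x 1 := forall_lt_of_isPreconnected isPreconnected_Icc
    (hx.mono (Icc_subset_Icc_right one_le_two)) hne_two (by norm_num) hx0 1 (by norm_num)
  have hx2 : 1 < x 2 := forall_lt_of_isPreconnected isPreconnected_Icc
    (hx.mono (Icc_subset_Icc_left zero_le_one)) hne_one (left_mem_Icc.2 one_le_two) (by linarith) 2
    (by norm_num)
  linarith [zigzag_le_two hx2.le, (h 2 (by norm_num)).1]

/-- The fibre map with parameter `s ∈ [0, 2]`. The bound `1 + x` takes over on `[-1, 0]`, the factor
`3` turns the value `1` into the right end of the interval, and `projIcc` truncates. -/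
def zigzagFiber (s : ℝ) (x : Icc (-1 : ℝ) 3) : Icc (-1 : ℝ) 3 :=
  projIcc (-1) 3 (by norm_num) (3 * min (1 + (x : ℝ)) (zigzag x - s))

lemma coe_zigzagFiber (s : ℝ) (x : Icc (-1 : ℝ) 3) :
    (zigzagFiber s x : ℝ) = max (-1) (min 3 (3 * min (1 + (x : ℝ)) (zigzag x - s))) :=
  coe_projIcc ..

/-- The 3-cycle `0 ↦ 3 ↦ -1 ↦ 0` common to all fibre maps. -/
def cyclePoint : Fin 3 → Icc (-1 : ℝ) 3 :=
  ![⟨0, by norm_num⟩, ⟨3, by norm_num⟩, ⟨-1, by norm_num⟩]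

lemma zigzagFiber_cyclePoint {s : ℝ} (hs : s ∈ Icc (0 : ℝ) 2) (i : Fin 3) :
    zigzagFiber s (cyclePoint i) = cyclePoint (i + 1) := by
  obtain ⟨hs0, hs2⟩ := hs
  ext
  rw [coe_zigzagFiber]
  fin_cases i
  · change max (-1) (min 3 (3 * min (1 + 0) (zigzag 0 - s))) = 3
    grind [zigzag]
  · change max (-1) (min 3 (3 * min (1 + 3) (zigzag 3 - s))) = -1
    grind [zigzag]
  · change max (-1) (min 3 (3 * min (1 + -1) (zigzag (-1) - s))) = 0
    grind [zigzag]

lemma cyclePoint_add_one_ne (i : Fin 3) : cyclePoint (i + 1) ≠ cyclePoint i := by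
  rw [Ne, Subtype.ext_iff]
  fin_cases i
  · exact three_ne_zero
  · change (-1 : ℝ) ≠ 3
    norm_num
  · change (0 : ℝ) ≠ -1
    norm_num

lemma zigzagFiber_pos {s : ℝ} {x : Icc (-1 : ℝ) 3} (hs : s ≤ 2) (hx : (x : ℝ) ∈ Ioo (-1) 0) :
    0 < (zigzagFiber s x : ℝ) := by
  have hzigzag : 3 - 2 * (x : ℝ) ≤ zigzag x := le_max_left _ _
  have hmin : 0 < min (1 + (x : ℝ)) (zigzag x - s) :=
    lt_min (by linarith [hx.1]) (by linarith [hx.2])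
  rw [coe_zigzagFiber]
  exact lt_max_of_lt_right (lt_min (by norm_num) (by positivity))

lemma zigzag_sub_mem_Ioo {s : ℝ} {x : Icc (-1 : ℝ) 3} (hx : 0 < (x : ℝ))
    (h : (zigzagFiber s x : ℝ) ∈ Ioo 0 3) : zigzag x - s ∈ Ioo 0 1 := by
  rw [coe_zigzagFiber] at h
  grind

end Zigzag

section ZigzagMap

variable {ρ : ℝ}

/-- The forced map over the rotation by `ρ` with fibre map `zigzagFiber (4 * ‖θ‖)` over `θ`; the
parameter `4 * ‖θ‖`, with `‖θ‖` the distance to `0`, increases from `0` to `2` on `[0, 1/2]`. -/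
def zigzagMap (ρ : ℝ) (p : T1 × Icc (-1 : ℝ) 3) : T1 × Icc (-1 : ℝ) 3 :=
  (p.1 + (ρ : T1), zigzagFiber (4 * ‖p.1‖) p.2)

lemma continuous_zigzagMap (ρ : ℝ) : Continuous (zigzagMap ρ) := by
  unfold zigzagMap zigzagFiber
  fun_prop

lemma four_mul_norm_mem_Icc (θ : T1) : 4 * ‖θ‖ ∈ Icc (0 : ℝ) 2 := by
  have hle := AddCircle.norm_le_half_period (1 : ℝ) (x := θ) one_ne_zero
  rw [abs_one] at hle
  exact ⟨by positivity, by linarith⟩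

lemma four_mul_norm_coe_div_four {s : ℝ} (hs : s ∈ Icc (0 : ℝ) 2) :
    4 * ‖((s / 4 : ℝ) : T1)‖ = s := by
  have habs : |s / 4| = s / 4 := abs_of_nonneg (by linarith [hs.1])
  rw [(AddCircle.norm_coe_eq_abs_iff 1 one_ne_zero).2, habs]
  · ring
  · rw [habs, abs_one]
    linarith [hs.2]

lemma image_zigzagMap_curveGraph_eq_iff {η ζ : T1 → Icc (-1 : ℝ) 3} :
    zigzagMap ρ '' curveGraph η = curveGraph ζ ↔
      ∀ θ, zigzagFiber (4 * ‖θ‖) (η θ) = ζ (θ + (ρ : T1)) := by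
  rw [image_curveGraph_eq_iff (add_right_surjective (ρ : T1)) fun _ => rfl]
  simp only [zigzagMap, Prod.mk.injEq, true_and]

lemma image_zigzagMap_curveGraph_cyclePoint (i : Fin 3) :
    zigzagMap ρ '' curveGraph (fun _ => cyclePoint i) =
      curveGraph fun _ => cyclePoint (i + 1) :=
  image_zigzagMap_curveGraph_eq_iff.2 fun θ =>
    zigzagFiber_cyclePoint (four_mul_norm_mem_Icc θ) i

lemma image_iterate_zigzagMap_curveGraph_cyclePoint (i : Fin 3) :
    (zigzagMap ρ)^[3] '' curveGraph (fun _ => cyclePoint i) =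
      curveGraph fun _ => cyclePoint i := by
  have hi : i + 1 + 1 + 1 = i := by decide +revert
  rw [image_iterate_eq, iterate_succ_apply, iterate_succ_apply, iterate_one]
  simp only [image_zigzagMap_curveGraph_cyclePoint, hi]

lemma image_zigzagMap_curveGraph_cyclePoint_ne (i : Fin 3) :
    zigzagMap ρ '' curveGraph (fun _ => cyclePoint i) ≠ curveGraph fun _ => cyclePoint i := by
  intro h
  have h0 := image_zigzagMap_curveGraph_eq_iff.1 h 0
  rw [zigzagFiber_cyclePoint (four_mul_norm_mem_Icc 0)] at h0
  exact cyclePoint_add_one_ne i h0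

section InvariantCurve

variable {η : T1 → Icc (-1 : ℝ) 3}

lemma ne_cyclePoint_of_image_zigzagMap_eq (hρ : Irrational ρ) (hη : Continuous η)
    (h : zigzagMap ρ '' curveGraph η = curveGraph η) (θ : T1) (i : Fin 3) :
    η θ ≠ cyclePoint i := by
  intro hθ
  have hconst : η = fun _ => cyclePoint i :=
    eq_of_image_eq_of_image_iterate_eq (add_right_surjective (ρ : T1)) (fun _ => rfl)
      (denseRange_iterate_iterate_add_right (by rwa [div_one]) three_ne_zero θ)
      hη continuous_const h (image_iterate_zigzagMap_curveGraph_cyclePoint i) hθ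
  exact image_zigzagMap_curveGraph_cyclePoint_ne i (hconst ▸ h)

lemma pos_of_image_zigzagMap_eq (hη : Continuous η)
    (h : zigzagMap ρ '' curveGraph η = curveGraph η) (hne : ∀ θ i, η θ ≠ cyclePoint i)
    (θ : T1) : 0 < (η θ : ℝ) := by
  have hne_zero : ∀ t ∈ univ, (η t : ℝ) ≠ 0 := fun t _ ht => hne t 0 (Subtype.ext ht)
  obtain ⟨t, ht⟩ : ∃ t, 0 < (η t : ℝ) := by
    rcases (hne_zero 0 (mem_univ 0)).lt_or_gt with hneg | hpos
    · have hgt : -1 < (η 0 : ℝ) := (η 0).2.1.lt_of_ne' fun h' => hne 0 2 (Subtype.ext h')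
      refine ⟨0 + (ρ : T1), ?_⟩
      rw [← image_zigzagMap_curveGraph_eq_iff.1 h]
      exact zigzagFiber_pos (four_mul_norm_mem_Icc 0).2 ⟨hgt, hneg⟩
    · exact ⟨0, hpos⟩
  exact forall_lt_of_isPreconnected isPreconnected_univ (by fun_prop) hne_zero (mem_univ t) ht
    θ (mem_univ θ)

lemma image_zigzagMap_curveGraph_ne (hρ : Irrational ρ) (hη : Continuous η) :
    zigzagMap ρ '' curveGraph η ≠ curveGraph η := by
  intro h
  have hne := ne_cyclePoint_of_image_zigzagMap_eq hρ hη h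
  have hpos := pos_of_image_zigzagMap_eq hη h hne
  have hlt : ∀ θ, (η θ : ℝ) < 3 := fun θ =>
    (η θ).2.2.lt_of_ne fun h' => hne θ 1 (Subtype.ext h')
  obtain ⟨s, hs, hs_notMem⟩ := exists_zigzag_sub_notMem_Ioo
    (x := fun s => η ((s / 4 : ℝ) : T1)) (by fun_prop)
  refine hs_notMem (zigzag_sub_mem_Ioo (hpos _) ?_)
  have hfiber := image_zigzagMap_curveGraph_eq_iff.1 h ((s / 4 : ℝ) : T1)
  rw [four_mul_norm_coe_div_four hs] at hfiber
  rw [hfiber]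
  exact ⟨hpos _, hlt _⟩

end InvariantCurve

end ZigzagMap

theorem stmt6_general {ρ : ℝ} (hρ : Irrational ρ) :
    ∃ F : T1 × Icc (-1 : ℝ) 3 → T1 × Icc (-1 : ℝ) 3, Continuous F ∧
      (∀ p, (F p).1 = p.1 + (ρ : T1)) ∧
      (∃ γ : T1 → Icc (-1 : ℝ) 3, Continuous γ ∧
        F^[3] '' curveGraph γ = curveGraph γ ∧ F '' curveGraph γ ≠ curveGraph γ) ∧
      (∀ η : T1 → Icc (-1 : ℝ) 3, Continuous η → F '' curveGraph η ≠ curveGraph η) :=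
  ⟨zigzagMap ρ, continuous_zigzagMap ρ, fun _ => rfl,
    ⟨fun _ => cyclePoint 0, continuous_const, image_iterate_zigzagMap_curveGraph_cyclePoint 0,
      image_zigzagMap_curveGraph_cyclePoint_ne 0⟩,
    fun _ hη => image_zigzagMap_curveGraph_ne hρ hη⟩

/-- a quasiperiodically forced interval map with a three-periodic
continuous curve but no invariant continuous curve. -/
theorem stmt6 :
    ∃ I : Set ℝ, IsCompact I ∧ I.OrdConnected ∧
      ∃ ρ : ℝ, Irrational ρ ∧
        ∃ F : T1 × ↥I → T1 × ↥I, Continuous F ∧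
          (∀ p : T1 × ↥I, (F p).1 = p.1 + (ρ : T1)) ∧
          (∃ γ : T1 → ↥I, Continuous γ ∧
            F^[3] '' curveGraph γ = curveGraph γ ∧ F '' curveGraph γ ≠ curveGraph γ) ∧
          (∀ η : T1 → ↥I, Continuous η → F '' curveGraph η ≠ curveGraph η) :=
  ⟨Icc (-1) 3, isCompact_Icc, ordConnected_Icc, √2, irrational_sqrt_two,
    stmt6_general irrational_sqrt_two⟩

end
end

section
/- Let R be an irrational rotation of T¹ = ℝ/ℤ, x₀ ∈ T¹ with 0 ∉ {xₙ := Rⁿ(x₀) : n ∈ ℤ}, let (aₙ)_{n∈ℤ} be strictly positive reals with Σ_{n∈ℤ} aₙ < 1, b := 1 − Σ aₙ, and ν := Σ_{n∈ℤ} aₙ δ_{xₙ} + b·Leb_{T¹}. Let h(x) := min{ y : ν[0,y] ≥ x } (identifying T¹ with [0,1)), Iₙ := h^{-1}{xₙ} = [cₙ, dₙ], and A := T¹ \ ⋃_{n∈ℤ} [cₙ, dₙ), so that h|_A : A → T¹ is a bijection. Then the map f̃ := (h|_A)^{-1} ∘ R ∘ (h|_A) : A → A is strictly order-preserving and uniformly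 continuous on A. -/
open Set Function MeasureTheory

noncomputable section

/-- The identification of `T¹` with `[0,1)`. -/
def lift1 : T1 → ℝ := fun x => ((AddCircle.equivIco 1 0 x : ↥(Set.Ico (0:ℝ) (0+1))) : ℝ)

/-!
A point `z ∈ A` is the right endpoint of its fibre, `z = ν[0, h z]`. Hence for `u, v ∈ A` the
difference `v - u` is, modulo `1`, the `ν`-mass of the arc `(h u, h v]`, while `f̃ v - f̃ u` is the
`ν`-mass of the rotated arc, that is, the mass of `(h u, h v]` under the measure `μ` obtained by
rotating `ν` back. Rotation permutes the atoms of `ν` and preserves Lebesgue measure, so `μ ≪ ν`,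
and uniform continuity of `f̃` is the `ε`-`δ` form of absolute continuity: two points of `A` are
close exactly when the arc or its complement has small mass. The cyclic order is preserved because
rotations preserve it and `y ↦ ν[0, y]` is strictly increasing, thanks to the Lebesgue component.
-/

theorem exists_measure_lt_of_absolutelyContinuous {α : Type*} [MeasurableSpace α]
    {μ ν : Measure α} [IsFiniteMeasure μ] [SigmaFinite ν] (hac : μ ≪ ν) {ε : ENNReal} (hε : ε ≠ 0) :
    ∃ δ > 0, ∀ s, ν s < δ → μ s < ε := by
  obtain ⟨δ, hδ, hlt⟩ :=
    exists_pos_setLIntegral_lt_of_measure_lt (Measure.lintegral_rnDeriv_lt_top μ ν).ne hε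
  exact ⟨δ, hδ, fun s hs => by simpa only [Measure.setLIntegral_rnDeriv hac] using hlt s hs⟩

theorem norm_coe_eq_min {t : ℝ} (ht : t ∈ Icc 0 1) : ‖(t : T1)‖ = min t (1 - t) := by
  rcases ht.2.lt_or_eq with h | rfl
  · rw [UnitAddCircle.norm_eq, abs_sub_round_eq_min, Int.fract_eq_self.2 ⟨ht.1, h⟩]
  · simp [UnitAddCircle.norm_eq]

theorem norm_coe_measureReal {α : Type*} [MeasurableSpace α] (μ : Measure α)
    [IsProbabilityMeasure μ] {s : Set α} (hs : MeasurableSet s) :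
    ‖(μ.real s : T1)‖ = min (μ.real s) (μ.real sᶜ) := by
  rw [norm_coe_eq_min ⟨measureReal_nonneg, measureReal_le_one⟩, probReal_compl_eq_one_sub hs]

theorem exists_norm_coe_measureReal_lt {α : Type*} [MeasurableSpace α] {μ ν : Measure α}
    [IsProbabilityMeasure μ] [IsProbabilityMeasure ν] (hac : μ ≪ ν) {ε : ℝ} (hε : 0 < ε) :
    ∃ δ > 0, ∀ s, MeasurableSet s → ‖(ν.real s : T1)‖ < δ → ‖(μ.real s : T1)‖ < ε := by
  obtain ⟨δ', hδ', hlt⟩ :=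
    exists_measure_lt_of_absolutelyContinuous hac (ENNReal.ofReal_pos.2 hε).ne'
  obtain ⟨δ, -, hδ, hδδ'⟩ := ENNReal.lt_iff_exists_real_btwn.1 hδ'
  have hreal (s : Set α) (hs : ν.real s < δ) : μ.real s < ε :=
    (ENNReal.lt_ofReal_iff_toReal_lt (measure_ne_top μ s)).1 <|
      hlt s (((ENNReal.lt_ofReal_iff_toReal_lt (measure_ne_top ν s)).2 hs).trans hδδ')
  refine ⟨δ, ENNReal.ofReal_pos.1 hδ, fun s hs hνs => ?_⟩
  rw [norm_coe_measureReal _ hs, min_lt_iff] at hνs ⊢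
  exact hνs.imp (hreal s) (hreal sᶜ)

/-- The mixture `∑ aₙ δ_{xₙ} + (1 - ∑ aₙ) m` of point masses and `m`, of which the measure `ν` of
the Denjoy construction is the case where `x` is an orbit of a rotation and `m` is Lebesgue measure.
The last coefficient is truncated to `0` if `∑ aₙ > 1`. -/
def atomicMixture {ι α : Type*} [MeasurableSpace α] (a : ι → ℝ) (x : ι → α) (m : Measure α) :
    Measure α :=
  Measure.sum (fun n => ENNReal.ofReal (a n) • Measure.dirac (x n)) +
    ENNReal.ofReal (1 - ∑' n, a n) • m

section AtomicMixture

variable {ι α : Type*} [MeasurableSpace α] {a : ι → ℝ}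

theorem isProbabilityMeasure_atomicMixture (ha : ∀ n, 0 ≤ a n) (hsum : Summable a)
    (hle : ∑' n, a n ≤ 1) (x : ι → α) (m : Measure α) [IsProbabilityMeasure m] :
    IsProbabilityMeasure (atomicMixture a x m) := by
  constructor
  simp only [atomicMixture, Measure.add_apply, Measure.sum_apply _ MeasurableSet.univ,
    Measure.smul_apply, measure_univ, smul_eq_mul, mul_one]
  rw [← ENNReal.ofReal_tsum_of_nonneg ha hsum,
    ← ENNReal.ofReal_add (tsum_nonneg ha) (sub_nonneg.2 hle), add_sub_cancel, ENNReal.ofReal_one]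

theorem absolutelyContinuous_atomicMixture (hlt : ∑' n, a n < 1) (x : ι → α) (m : Measure α) :
    m ≪ atomicMixture a x m :=
  (Measure.absolutelyContinuous_smul (ENNReal.ofReal_pos.2 (sub_pos.2 hlt)).ne').add_right' _

theorem dirac_absolutelyContinuous_atomicMixture {n : ι} (ha : 0 < a n) (x : ι → α)
    (m : Measure α) : Measure.dirac (x n) ≪ atomicMixture a x m :=
  (Measure.absolutelyContinuous_sum_right n <|
    Measure.absolutelyContinuous_smul (ENNReal.ofReal_pos.2 ha).ne').add_right _

theorem map_atomicMixture {β : Type*} [MeasurableSpace β] (a : ι → ℝ) (x : ι → α)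
    (m : Measure α) {f : α → β} (hf : Measurable f) :
    (atomicMixture a x m).map f = atomicMixture a (f ∘ x) (m.map f) := by
  simp only [atomicMixture, Measure.map_add _ _ hf, Measure.map_sum hf.aemeasurable,
    Measure.map_smul, Measure.map_dirac' hf, comp_apply]

theorem map_atomicMixture_absolutelyContinuous (ha : ∀ n, 0 < a n) {x : ι → α} {m : Measure α}
    {f : α → α} (hf : MeasurePreserving f m m) (hx : MapsTo f (range x) (range x)) :
    (atomicMixture a x m).map f ≪ atomicMixture a x m := by
  rw [map_atomicMixture _ _ _ hf.measurable, hf.map_eq]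
  refine .add_left (Measure.absolutelyContinuous_sum_left fun n => .smul_left ?_ _)
    (.add_right' .rfl _)
  obtain ⟨k, hk⟩ := hx (mem_range_self n)
  simpa only [comp_apply, hk] using dirac_absolutelyContinuous_atomicMixture (ha k) x m

end AtomicMixture

theorem lift1_mem_Ico (z : T1) : lift1 z ∈ Ico 0 1 := by
  simpa only [lift1, zero_add] using (AddCircle.equivIco (1 : ℝ) 0 z).2

theorem coe_lift1 (z : T1) : ((lift1 z : ℝ) : T1) = z :=
  AddCircle.coe_equivIco

theorem lift1_coe {t : ℝ} (ht : t ∈ Ico 0 1) : lift1 (t : T1) = t :=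
  AddCircle.equivIco_coe_of_mem (by simpa only [zero_add] using ht)

theorem lift1_injective : Injective lift1 :=
  LeftInverse.injective coe_lift1

theorem measurable_lift1 : Measurable lift1 :=
  measurable_subtype_coe.comp (AddCircle.measurableEquivIco 1 0).measurable

theorem coe_one_eq_zero : ((1 : ℝ) : T1) = 0 :=
  AddCircle.coe_period 1

theorem lift1_sub (u w : T1) : lift1 (u - w) =
    if lift1 w ≤ lift1 u then lift1 u - lift1 w else lift1 u - lift1 w + 1 := by
  have hu := lift1_mem_Ico u
  have hw := lift1_mem_Ico w
  split_ifs with h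
  · have hcoe : u - w = ((lift1 u - lift1 w : ℝ) : T1) := by
      rw [AddCircle.coe_sub, coe_lift1, coe_lift1]
    rw [hcoe, lift1_coe ⟨by linarith, by linarith [hu.2, hw.1]⟩]
  · have hcoe : u - w = ((lift1 u - lift1 w + 1 : ℝ) : T1) := by
      rw [AddCircle.coe_add, AddCircle.coe_sub, coe_lift1, coe_lift1, coe_one_eq_zero, add_zero]
    rw [hcoe, lift1_coe ⟨by linarith [hu.1, hw.2], by linarith⟩]

theorem btw_iff_lift1_sub_add_le (u v w : T1) :
    btw u v w ↔ lift1 (v - u) + lift1 (u - w) ≤ 1 := by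
  induction u using QuotientAddGroup.induction_on with | _ u
  induction v using QuotientAddGroup.induction_on with | _ v
  induction w using QuotientAddGroup.induction_on with | _ w
  have hneg : toIocMod one_pos 0 (w - u) = 1 - toIcoMod (one_pos : (0 : ℝ) < 1) 0 (u - w) := by
    rw [← neg_sub u w, toIocMod_neg, neg_zero]
  rw [QuotientAddGroup.btw_coe_iff', hneg, le_sub_iff_add_le]
  rfl

theorem sbtw_iff_one_lt_lift1_sub_add (u v w : T1) :
    sbtw u v w ↔ 1 < lift1 (v - w) + lift1 (w - u) := by
  rw [sbtw_iff_not_btw, btw_iff_lift1_sub_add_le, not_le]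

theorem sbtw_add_right_iff (u v w r : T1) : sbtw (u + r) (v + r) (w + r) ↔ sbtw u v w := by
  simp only [sbtw_iff_one_lt_lift1_sub_add, add_sub_add_right_eq_sub]

theorem sbtw_iff_lift1_lt (u v w : T1) :
    sbtw u v w ↔ (lift1 u < lift1 v ∧ lift1 v < lift1 w) ∨
      (lift1 v < lift1 w ∧ lift1 w < lift1 u) ∨ (lift1 w < lift1 u ∧ lift1 u < lift1 v) := by
  have hu := lift1_mem_Ico u
  have hv := lift1_mem_Ico v
  rw [sbtw_iff_one_lt_lift1_sub_add, lift1_sub, lift1_sub]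
  grind

/-- The distribution function `t ↦ ν[0, t]` of a measure on the circle. -/
def circleCDF (ν : Measure T1) (t : ℝ) : ℝ :=
  ν.real (lift1 ⁻¹' Iic t)

/-- The positively oriented arc `(u, v]` of the circle, which is empty if `u = v`. -/
def arcIoc (u v : T1) : Set T1 :=
  {w | lift1 (w - u) ∈ Ioc 0 (lift1 (v - u))}

theorem measurableSet_arcIoc (u v : T1) : MeasurableSet (arcIoc u v) :=
  measurable_lift1.comp (measurable_id.sub_const u) measurableSet_Ioc

theorem preimage_sub_right_arcIoc (u v r : T1) :
    (fun w => w - r) ⁻¹' arcIoc u v = arcIoc (u + r) (v + r) := by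
  simp only [arcIoc, preimage_ofPred_eq, add_sub_add_right_eq_sub, sub_sub, add_comm r]

theorem arcIoc_of_le {u v : T1} (huv : lift1 u ≤ lift1 v) :
    arcIoc u v = lift1 ⁻¹' Ioc (lift1 u) (lift1 v) := by
  ext w
  have hv := lift1_mem_Ico v
  have hw := lift1_mem_Ico w
  simp only [arcIoc, mem_ofPred_eq, mem_preimage, mem_Ioc, lift1_sub]
  grind

theorem arcIoc_of_lt {u v : T1} (hvu : lift1 v < lift1 u) :
    arcIoc u v = (lift1 ⁻¹' Ioc (lift1 v) (lift1 u))ᶜ := by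
  ext w
  have hu := lift1_mem_Ico u
  have hv := lift1_mem_Ico v
  have hw := lift1_mem_Ico w
  simp only [arcIoc, mem_ofPred_eq, mem_compl_iff, mem_preimage, mem_Ioc, lift1_sub]
  grind

section CircleCDF

variable (ν : Measure T1)

theorem measureReal_lift1_preimage_Ioc [IsFiniteMeasure ν] {s t : ℝ}
    (hst : s ≤ t) : ν.real (lift1 ⁻¹' Ioc s t) = circleCDF ν t - circleCDF ν s := by
  rw [← Iic_sdiff_Iic, preimage_sdiff]
  exact measureReal_sdiff (preimage_mono (Iic_subset_Iic.2 hst))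
    (measurable_lift1 measurableSet_Iic)

theorem coe_measureReal_arcIoc [IsProbabilityMeasure ν] (u v : T1) :
    (ν.real (arcIoc u v) : T1) = circleCDF ν (lift1 v) - circleCDF ν (lift1 u) := by
  rcases le_or_gt (lift1 u) (lift1 v) with huv | hvu
  · rw [arcIoc_of_le huv, measureReal_lift1_preimage_Ioc ν huv, AddCircle.coe_sub]
  · rw [arcIoc_of_lt hvu, probReal_compl_eq_one_sub (measurable_lift1 measurableSet_Ioc),
      measureReal_lift1_preimage_Ioc ν hvu.le, AddCircle.coe_sub, AddCircle.coe_sub,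
      coe_one_eq_zero, zero_sub, neg_sub]

theorem measure_lift1_preimage_Ioc_pos [ν.IsOpenPosMeasure] {s t : ℝ}
    (hs : 0 ≤ s) (hst : s < t) (ht : t ≤ 1) : 0 < ν (lift1 ⁻¹' Ioc s t) := by
  have hopen : IsOpen (((↑) : ℝ → T1) '' Ioo s t) := QuotientAddGroup.isOpenMap_coe _ isOpen_Ioo
  refine (hopen.measure_pos ν ((nonempty_Ioo.2 hst).image _)).trans_le (measure_mono ?_)
  rintro _ ⟨r, hr, rfl⟩
  rw [mem_preimage, lift1_coe ⟨hs.trans hr.1.le, hr.2.trans_le ht⟩]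
  exact Ioo_subset_Ioc_self hr

theorem circleCDF_strictMonoOn [IsFiniteMeasure ν] [ν.IsOpenPosMeasure] :
    StrictMonoOn (circleCDF ν) (Icc 0 1) := fun s hs t ht hst => by
  rw [← sub_pos, ← measureReal_lift1_preimage_Ioc ν hst.le]
  exact ENNReal.toReal_pos (measure_lift1_preimage_Ioc_pos ν hs.1 hst ht.2).ne'
    (measure_ne_top ν _)

theorem circleCDF_lift1_mem_Ico [IsProbabilityMeasure ν] [ν.IsOpenPosMeasure]
    (y : T1) : circleCDF ν (lift1 y) ∈ Ico 0 1 := by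
  have hy := lift1_mem_Ico y
  exact ⟨measureReal_nonneg, (circleCDF_strictMonoOn ν ⟨hy.1, hy.2.le⟩ ⟨zero_le_one, le_rfl⟩
    hy.2).trans_le measureReal_le_one⟩

theorem circleCDF_lift1_lt_iff [IsFiniteMeasure ν] [ν.IsOpenPosMeasure]
    (y y' : T1) : circleCDF ν (lift1 y) < circleCDF ν (lift1 y') ↔ lift1 y < lift1 y' :=
  (circleCDF_strictMonoOn ν).lt_iff_lt (Ico_subset_Icc_self (lift1_mem_Ico y))
    (Ico_subset_Icc_self (lift1_mem_Ico y'))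

end CircleCDF

/-- `h` is the quantile map `h(z) = min {y | ν[0, y] ≥ z}` of `ν`, the circle being ordered as
`[0, 1)`. -/
def IsQuantileMap (ν : Measure T1) (h : T1 → T1) : Prop :=
  ∀ z, ENNReal.ofReal (lift1 z) ≤ ν {w | lift1 w ≤ lift1 (h z)} ∧
    ∀ y, ENNReal.ofReal (lift1 z) ≤ ν {w | lift1 w ≤ lift1 y} → lift1 (h z) ≤ lift1 y

/-- Every `z ∈ A` is the right endpoint `ν[0, h(z)]` of its fibre under the quantile map `h`, so
that `y ↦ ν[0, y]` inverts `h` on `A`. -/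
def IsRightSection (ν : Measure T1) (h : T1 → T1) (A : Set T1) : Prop :=
  ∀ z ∈ A, lift1 z = circleCDF ν (lift1 (h z))

namespace IsQuantileMap

theorem lift1_le_iff {ν : Measure T1} [IsFiniteMeasure ν] {h : T1 → T1} (hh : IsQuantileMap ν h)
    (z y : T1) : lift1 (h z) ≤ lift1 y ↔ lift1 z ≤ circleCDF ν (lift1 y) := by
  refine Iff.trans ⟨fun hzy => (hh z).1.trans (measure_mono fun w hw => ?_), (hh z).2 y⟩
    (ENNReal.ofReal_le_iff_le_toReal (measure_ne_top ν _))
  exact le_trans (mem_ofPred.1 hw) hzy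

variable {ν : Measure T1} [IsProbabilityMeasure ν] [ν.IsOpenPosMeasure] {h : T1 → T1}

theorem apply_coe_circleCDF (hh : IsQuantileMap ν h) (y : T1) :
    h (circleCDF ν (lift1 y) : T1) = y := by
  have hiff (y' : T1) := hh.lift1_le_iff (circleCDF ν (lift1 y) : T1) y'
  simp only [lift1_coe (circleCDF_lift1_mem_Ico ν y)] at hiff
  refine lift1_injective (le_antisymm ((hiff y).2 le_rfl) ?_)
  rw [← not_lt, ← circleCDF_lift1_lt_iff ν, not_lt]
  exact (hiff _).1 le_rfl

theorem coe_circleCDF_notMem_of_fiber (hh : IsQuantileMap ν h) {x c d : T1}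
    (hcd : h ⁻¹' {x} = {z | lift1 c ≤ lift1 z ∧ lift1 z ≤ lift1 d}) (y : T1) :
    (circleCDF ν (lift1 y) : T1) ∉ {z | lift1 c ≤ lift1 z ∧ lift1 z < lift1 d} := by
  rintro ⟨hc, hd⟩
  have hy : y = x := by
    rw [← hh.apply_coe_circleCDF y]
    exact hcd.ge ⟨hc, hd.le⟩
  have hdx : h d = y := hy ▸ hcd.ge ⟨hc.trans hd.le, le_rfl⟩
  rw [lift1_coe (circleCDF_lift1_mem_Ico ν y)] at hd
  exact hd.not_ge ((hh.lift1_le_iff d y).1 (hdx ▸ le_rfl))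

theorem isRightSection (hh : IsQuantileMap ν h) {A : Set T1} (hinj : InjOn h A)
    (hA : ∀ y, (circleCDF ν (lift1 y) : T1) ∈ A) : IsRightSection ν h A := fun z hz => by
  have hzF : z = (circleCDF ν (lift1 (h z)) : T1) :=
    hinj hz (hA _) (hh.apply_coe_circleCDF (h z)).symm
  conv_lhs => rw [hzF]
  exact lift1_coe (circleCDF_lift1_mem_Ico ν _)

end IsQuantileMap

namespace IsRightSection

variable {ν : Measure T1} {h : T1 → T1} {A : Set T1}

theorem sbtw_apply_iff [IsFiniteMeasure ν] [ν.IsOpenPosMeasure] (hA : IsRightSection ν h A)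
    {u v w : T1} (hu : u ∈ A) (hv : v ∈ A) (hw : w ∈ A) :
    sbtw (h u) (h v) (h w) ↔ sbtw u v w := by
  simp only [sbtw_iff_lift1_lt, hA u hu, hA v hv, hA w hw, circleCDF_lift1_lt_iff]

theorem dist_eq_norm_measureReal_arcIoc [IsProbabilityMeasure ν] (hA : IsRightSection ν h A)
    {u v : T1} (hu : u ∈ A) (hv : v ∈ A) :
    dist u v = ‖(ν.real (arcIoc (h u) (h v)) : T1)‖ := by
  rw [coe_measureReal_arcIoc, ← hA u hu, ← hA v hv, coe_lift1, coe_lift1, dist_eq_norm']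

variable {r : T1} {f : T1 → T1}

theorem sbtw_of_semiconj_add [IsFiniteMeasure ν] [ν.IsOpenPosMeasure] (hA : IsRightSection ν h A)
    (hf : ∀ z ∈ A, f z ∈ A ∧ h (f z) = h z + r) {u v w : T1} (hu : u ∈ A) (hv : v ∈ A)
    (hw : w ∈ A) (huvw : sbtw u v w) : sbtw (f u) (f v) (f w) := by
  rw [← hA.sbtw_apply_iff (hf u hu).1 (hf v hv).1 (hf w hw).1, (hf u hu).2, (hf v hv).2,
    (hf w hw).2, sbtw_add_right_iff, hA.sbtw_apply_iff hu hv hw]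
  exact huvw

theorem uniformContinuousOn_of_semiconj_add [IsProbabilityMeasure ν] (hA : IsRightSection ν h A)
    (hf : ∀ z ∈ A, f z ∈ A ∧ h (f z) = h z + r)
    (hac : ν.map (fun w => w - r) ≪ ν) : UniformContinuousOn f A := by
  have hsub : Measurable fun w : T1 => w - r := measurable_id.sub_const r
  have := Measure.isProbabilityMeasure_map (μ := ν) hsub.aemeasurable
  rw [Metric.uniformContinuousOn_iff]
  intro ε hε
  obtain ⟨δ, hδ, hlt⟩ := exists_norm_coe_measureReal_lt hac hε
  refine ⟨δ, hδ, fun u hu v hv huv => ?_⟩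
  have harc := measurableSet_arcIoc (h u) (h v)
  rw [hA.dist_eq_norm_measureReal_arcIoc hu hv] at huv
  rw [hA.dist_eq_norm_measureReal_arcIoc (hf u hu).1 (hf v hv).1, (hf u hu).2, (hf v hv).2,
    ← preimage_sub_right_arcIoc, ← map_measureReal_apply hsub harc]
  exact hlt _ harc huv

end IsRightSection

theorem mapsTo_sub_right_range_zsmul_orbit {G : Type*} [AddGroup G] {x : ℤ → G} {x₀ r : G}
    (hx : ∀ n, x n = x₀ + n • r) : MapsTo (fun w => w - r) (range x) (range x) := by
  rintro _ ⟨n, rfl⟩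
  exact ⟨n - 1, by rw [hx, hx, sub_one_zsmul, ← add_assoc, ← sub_eq_add_neg]⟩

theorem stmt10_general {ι : Type*} (r : T1) (x : ι → T1)
    (hx : MapsTo (fun w => w - r) (range x) (range x))
    (a : ι → ℝ) (ha : ∀ n, 0 < a n) (hsum : Summable a) (hlt : ∑' n, a n < 1)
    (h : T1 → T1) (hmin : IsQuantileMap (atomicMixture a x volume) h)
    (c d : ι → T1)
    (hcd : ∀ n, h ⁻¹' {x n} = {z | lift1 (c n) ≤ lift1 z ∧ lift1 z ≤ lift1 (d n)})
    (A : Set T1)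
    (hA : A = univ \ ⋃ n, {z | lift1 (c n) ≤ lift1 z ∧ lift1 z < lift1 (d n)})
    (hinj : InjOn h A)
    (ft : T1 → T1) (hft : ∀ z ∈ A, ft z ∈ A ∧ h (ft z) = h z + r) :
    (∀ u ∈ A, ∀ v ∈ A, ∀ w ∈ A, sbtw u v w → sbtw (ft u) (ft v) (ft w)) ∧
    UniformContinuousOn ft A := by
  have hvol : IsProbabilityMeasure (volume : Measure T1) := ⟨UnitAddCircle.measure_univ⟩
  have hprob := isProbabilityMeasure_atomicMixture (fun n => (ha n).le) hsum hlt.le x volume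
  have hpos := (absolutelyContinuous_atomicMixture hlt x volume).isOpenPosMeasure
  have hac := map_atomicMixture_absolutelyContinuous ha (measurePreserving_sub_right volume r) hx
  have hmem (y : T1) : (circleCDF (atomicMixture a x volume) (lift1 y) : T1) ∈ A := by
    simpa only [hA, mem_sdiff, mem_univ, true_and, mem_iUnion, not_exists] using
      fun n => hmin.coe_circleCDF_notMem_of_fiber (hcd n) y
  have hsec := hmin.isRightSection hinj hmem
  exact ⟨fun u hu v hv w hw => hsec.sbtw_of_semiconj_add hft hu hv hw,
    hsec.uniformContinuousOn_of_semiconj_add hft hac⟩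

/-- in the Denjoy construction, the map `f̃ = (h|_A)⁻¹ ∘ R ∘ (h|_A)` is
strictly (cyclic-)order-preserving and uniformly continuous on `A`. -/
theorem stmt10 (ρ : ℝ) (hρ : Irrational ρ)
    (x₀ : T1) (x : ℤ → T1) (hx : ∀ n : ℤ, x n = x₀ + n • (ρ : T1))
    (h0 : (0 : T1) ∉ Set.range x)
    (a : ℤ → ℝ) (ha : ∀ n, 0 < a n) (hsum : Summable a) (hlt : (∑' n : ℤ, a n) < 1)
    (ν : Measure T1)
    (hν : ν = Measure.sum (fun n : ℤ => ENNReal.ofReal (a n) • Measure.dirac (x n)) +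
      ENNReal.ofReal (1 - ∑' n : ℤ, a n) • volume)
    (h : T1 → T1)
    (hmin : ∀ z, ENNReal.ofReal (lift1 z) ≤ ν {w | lift1 w ≤ lift1 (h z)} ∧
      ∀ y, ENNReal.ofReal (lift1 z) ≤ ν {w | lift1 w ≤ lift1 y} → lift1 (h z) ≤ lift1 y)
    (c d : ℤ → T1)
    (hcd : ∀ n : ℤ, h ⁻¹' {x n} = {z | lift1 (c n) ≤ lift1 z ∧ lift1 z ≤ lift1 (d n)})
    (A : Set T1)
    (hA : A = Set.univ \ ⋃ n : ℤ, {z | lift1 (c n) ≤ lift1 z ∧ lift1 z < lift1 (d n)})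
    (hbij : Set.BijOn h A Set.univ)
    (ft : T1 → T1)
    (hft : ∀ z ∈ A, ft z ∈ A ∧ h (ft z) = h z + (ρ : T1)) :
    (∀ u ∈ A, ∀ v ∈ A, ∀ w ∈ A, sbtw u v w → sbtw (ft u) (ft v) (ft w)) ∧
    UniformContinuousOn ft A := by
  subst hν
  exact stmt10_general ρ x (mapsTo_sub_right_range_zsmul_orbit hx) a ha hsum hlt h hmin c d hcd A hA
    hbij.injOn ft hft

end
end
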